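/- Let ρ : ℝ^n → (0,∞) be a continuous positive function for which there exist 0 < ε ≤ 1 and 0 < R_ε ≤ 1/(2(1−ε)) (with no upper bound condition on R_ε in the case ε = 1) such that ρ(x) ≤ R_ε⟨x⟩^{1−ε} for all x ∈ ℝ^n. If ω ⊂ ℝ^n is a measurable subset which is γ-thick with respect to the density ρ with 1 − 6^{−n} < γ ≤ 1, then there exist positive constants κ > 0 and C̃ > 0 (depending on n, R_ε, γ, ε) and a positive constant κ̃ > 1 depending only on the dimension n such that for every integer N ≥ 1 and every f ∈ E_N, ‖f‖_{L²(ℝ^n)} ≤ κ (κ̃/γ)^{C̃ N^{1−ε/2}} ‖f‖_{L²(ω)}. -/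

import Mathlib

open MeasureTheory
open scoped BigOperators ENNReal NNReal

noncomputable section

abbrev En (n : ℕ) := EuclideanSpace ℝ (Fin n)

/-- One-dimensional Hermite function. -/
def hermite1 (k : ℕ) (x : ℝ) : ℝ :=
  (-1 : ℝ) ^ k * ((2 ^ k * (k.factorial : ℝ) * Real.sqrt Real.pi) ^ (-(1/2 : ℝ))) *
    Real.exp (x ^ 2 / 2) * iteratedDeriv k (fun y => Real.exp (-y ^ 2)) x

/-- Tensorized Hermite function on ℝⁿ. -/
def hermiteFun (n : ℕ) (α : Fin n → ℕ) (x : En n) : ℂ :=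
  ∏ j, (hermite1 (α j) (x j) : ℂ)

/-- The span E_N of Hermite functions with |α| ≤ N. -/
def hermiteSpan (n N : ℕ) : Submodule ℂ (En n → ℂ) :=
  Submodule.span ℂ {g | ∃ α : Fin n → ℕ, (∑ j, α j) ≤ N ∧ g = hermiteFun n α}

/-- Japanese bracket ⟨x⟩. -/
def jap (n : ℕ) (x : En n) : ℝ := Real.sqrt (1 + ‖x‖ ^ 2)

/-- γ-thickness with respect to a density ρ. -/
def ThickWith (n : ℕ) (γ : ℝ) (ρ : En n → ℝ) (ω : Set (En n)) : Prop :=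
  ∀ x : En n,
    ENNReal.ofReal γ * volume (Metric.ball x (ρ x)) ≤ volume (ω ∩ Metric.ball x (ρ x))

/-- L² norm on ℝⁿ. -/
def L2norm (n : ℕ) (f : En n → ℂ) : ℝ := Real.sqrt (∫ x, ‖f x‖ ^ 2)

/-- L² norm on a subset ω. -/
def L2normOn (n : ℕ) (ω : Set (En n)) (f : En n → ℂ) : ℝ :=
  Real.sqrt (∫ x in ω, ‖f x‖ ^ 2)

/-!
A function in `E_N` is `(p + i q) e^{-|x|²/2}` with real polynomials `p`, `q` of degree at most
`N`, so its `L²` mass is the sum of the Gaussian masses `∫ p² e^{-|x|²}` and `∫ q² e^{-|x|²}`, and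
it is enough to recover the Gaussian mass of one such `p` from its part on `ω`.

The weighted adjoint of a directional derivative `∂_v` is `2 ⟪v, ·⟫ - ∂_v`, which gives the
Bernstein inequality `‖∂_v p‖² ≤ 2 N |v|² ‖p‖²` and the bound `‖⟪v, ·⟫ p‖² ≤ (2 N + 1) |v|² ‖p‖²`.
By the latter, half of the mass lies in a ball of radius `ρ₀ ∼ √N`. There `ρ ≲ N^{(1-ε)/2}`, so
Vitali's covering lemma makes `ω` fill a fixed proportion of every ball of some radius
`r ∼ N^{(1-ε)/2}` centered at a point `y` of that large ball, hence a fixed proportion of the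
bundle of segments `t ↦ y + t v` with `|v| < 2 r` and `t ∈ [0, 1]`.

Along a segment, split `t ↦ p (y + t v)` into its Taylor polynomial of degree `m` and the
remainder. A Remez-type inequality shows that the Taylor polynomial is at least `e^{-K m} |p y|`
outside a set of times of small measure, while the Bernstein inequality makes the remainder
negligible on average once `m` exceeds a constant multiple of `r √N`. Averaging over `y` and `v`
bounds the mass on the ball of radius `ρ₀` by `e^{O(m + ρ₀ r + r²)}` times the mass on `ω`, and
all three terms in the exponent are `O(N^{1-ε/2})`.
-/

/-! ### A Remez-type inequality in measure -/

lemma volume_norm_sub_lt_mul_norm_inter_Icc_le (z : ℂ) {δ : ℝ} (hδ : 0 ≤ δ) :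
    volume ({t : ℝ | ‖(t : ℂ) - z‖ < δ * ‖z‖} ∩ Set.Icc 0 1) ≤ ENNReal.ofReal (4 * δ) := by
  rcases le_total ‖z‖ 2 with hz | hz
  · refine (Real.volume_le_diam _).trans (Metric.ediam_le fun a ha b hb => ?_)
    rw [edist_dist]
    refine ENNReal.ofReal_le_ofReal ?_
    calc dist a b = dist (a : ℂ) b := (Complex.isometry_ofReal.dist_eq a b).symm
      _ ≤ ‖(a : ℂ) - z‖ + ‖(b : ℂ) - z‖ := by
          simpa only [dist_eq_norm] using dist_triangle_right (a : ℂ) b z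
      _ ≤ δ * ‖z‖ + δ * ‖z‖ := add_le_add ha.1.le hb.1.le
      _ ≤ 4 * δ := by nlinarith
  rcases le_total (1 / 2) δ with h | h
  · calc _ ≤ volume (Set.Icc (0 : ℝ) 1) := measure_mono Set.inter_subset_right
      _ = ENNReal.ofReal 1 := by simp
      _ ≤ _ := ENNReal.ofReal_le_ofReal (by linarith)
  · suffices {t : ℝ | ‖(t : ℂ) - z‖ < δ * ‖z‖} ∩ Set.Icc 0 1 = ∅ by simp [this]
    refine Set.eq_empty_of_forall_notMem fun t ⟨hlt, ht0, ht1⟩ => ?_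
    have hnorm : ‖(t : ℂ)‖ = t := by rw [Complex.norm_real, Real.norm_of_nonneg ht0]
    have := norm_sub_norm_le z t
    rw [norm_sub_rev] at this
    have : ‖(t : ℂ) - z‖ < δ * ‖z‖ := hlt
    nlinarith

lemma lintegral_posLog_norm_div_norm_sub_le (z : ℂ) :
    ∫⁻ t in Set.Icc (0 : ℝ) 1, ENNReal.ofReal (Real.posLog (‖z‖ / ‖(t : ℂ) - z‖)) ≤ 4 := by
  rw [lintegral_eq_lintegral_meas_lt _ (.of_forall fun _ => Real.posLog_nonneg)
    (Real.continuous_posLog.measurable.comp (by fun_prop)).aemeasurable]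
  calc
    _ ≤ ∫⁻ s in Set.Ioi (0 : ℝ), ENNReal.ofReal (4 * Real.exp (-s)) := by
      refine setLIntegral_mono (by fun_prop) fun s hs => ?_
      rw [Measure.restrict_apply' measurableSet_Icc]
      refine (measure_mono (Set.inter_subset_inter_left _ fun t ht => ?_)).trans
        (volume_norm_sub_lt_mul_norm_inter_Icc_le z (Real.exp_pos (-s)).le)
      have hlog : s < Real.log (‖z‖ / ‖(t : ℂ) - z‖) :=
        (lt_max_iff.1 ht).resolve_left (lt_asymm hs)
      have hpos : 0 < ‖z‖ / ‖(t : ℂ) - z‖ :=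
        (div_nonneg (norm_nonneg _) (norm_nonneg _)).lt_of_ne' fun h => by
          rw [h, Real.log_zero] at hlog; exact lt_asymm hs hlog
      have hdist : 0 < ‖(t : ℂ) - z‖ := (norm_nonneg _).lt_of_ne' fun h => by simp [h] at hpos
      rw [Real.lt_log_iff_exp_lt hpos, lt_div_iff₀ hdist] at hlog
      rw [Set.mem_ofPred_eq, Real.exp_neg, inv_mul_eq_div, lt_div_iff₀ (Real.exp_pos s), mul_comm]
      exact hlog
    _ = 4 := by
      rw [← ofReal_integral_eq_lintegral_ofReal ((integrableOn_exp_neg_Ioi 0).const_mul 4)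
        (.of_forall fun s => by positivity), integral_const_mul, integral_exp_neg_Ioi_zero]
      norm_num

lemma lintegral_posLog_prod_norm_div_norm_sub_le (s : Multiset ℂ) :
    ∫⁻ t in Set.Icc (0 : ℝ) 1,
      ENNReal.ofReal (Real.posLog (s.map fun z => ‖z‖ / ‖(t : ℂ) - z‖).prod) ≤ 4 * s.card := by
  induction s using Multiset.induction_on with
  | empty => simp
  | cons z s ih =>
    simp only [Multiset.map_cons, Multiset.prod_cons, Multiset.card_cons]
    calc
      _ ≤ ∫⁻ t in Set.Icc (0 : ℝ) 1, (ENNReal.ofReal (Real.posLog (‖z‖ / ‖(t : ℂ) - z‖)) +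
            ENNReal.ofReal (Real.posLog (s.map fun z => ‖z‖ / ‖(t : ℂ) - z‖).prod)) :=
        lintegral_mono fun t =>
          (ENNReal.ofReal_le_ofReal Real.posLog_mul).trans ENNReal.ofReal_add_le
      _ ≤ 4 + 4 * s.card := by
        have hmeas : Measurable fun t : ℝ => Real.posLog (‖z‖ / ‖(t : ℂ) - z‖) :=
          Real.continuous_posLog.measurable.comp (by fun_prop)
        rw [lintegral_add_left hmeas.ennreal_ofReal]
        exact add_le_add (lintegral_posLog_norm_div_norm_sub_le z) ih
      _ = 4 * ↑(s.card + 1) := by push_cast; ring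

open Polynomial in
lemma norm_eval_zero_div_norm_eval {T : ℂ[X]} (hT : T ≠ 0) (x : ℂ) :
    ‖T.eval 0‖ / ‖T.eval x‖ = (T.roots.map fun z => ‖z‖ / ‖x - z‖).prod := by
  have hs := IsAlgClosed.splits T
  have hlead : ‖T.leadingCoeff‖ ≠ 0 := by simpa using hT
  have hprod (y : ℂ) : ‖(T.roots.map (y - ·)).prod‖ = (T.roots.map fun z => ‖y - z‖).prod := by
    simpa [Function.comp_def] using map_multiset_prod (normHom : ℂ →*₀ ℝ) (T.roots.map (y - ·))
  rw [hs.eval_eq_prod_roots, hs.eval_eq_prod_roots, norm_mul, norm_mul,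
    mul_div_mul_left _ _ hlead, hprod, hprod, Multiset.prod_map_div]
  simp only [zero_sub, norm_neg]

open Polynomial in
lemma lintegral_posLog_norm_eval_zero_div_norm_eval_le (T : ℂ[X]) :
    ∫⁻ t in Set.Icc (0 : ℝ) 1,
      ENNReal.ofReal (Real.posLog (‖T.eval 0‖ / ‖T.eval (t : ℂ)‖)) ≤ 4 * T.natDegree := by
  rcases eq_or_ne T 0 with rfl | hT
  · simp
  simp only [norm_eval_zero_div_norm_eval hT]
  refine (lintegral_posLog_prod_norm_div_norm_sub_le _).trans ?_
  gcongr
  exact T.card_roots'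

lemma le_posLog_div_of_lt_exp_neg_mul {a b c : ℝ} (hb : 0 < b) (h : b < Real.exp (-c) * a) :
    c ≤ Real.posLog (a / b) := by
  have ha : 0 < a := pos_of_mul_pos_right (hb.trans h) (Real.exp_pos _).le
  refine le_max_of_le_right ?_
  rw [Real.le_log_iff_exp_le (by positivity), le_div_iff₀ hb, mul_comm,
    ← le_div_iff₀ (Real.exp_pos c), div_eq_inv_mul, ← Real.exp_neg]
  exact h.le

open Polynomial in
lemma volume_setOf_norm_eval_lt_le (T : ℂ[X]) {m : ℕ} (hm : T.natDegree ≤ m) {K : ℝ}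
    (hK : 0 < K) :
    volume.restrict (Set.Icc (0 : ℝ) 1)
      {t | ‖T.eval (t : ℂ)‖ < Real.exp (-(K * m)) * ‖T.eval 0‖} ≤ ENNReal.ofReal (4 / K) := by
  rcases m.eq_zero_or_pos with rfl | hmpos
  · rw [Polynomial.eq_C_of_natDegree_le_zero hm]
    simp
  have hm0 : (0 : ℝ) < m := by exact_mod_cast hmpos
  have hsub : {t : ℝ | ‖T.eval (t : ℂ)‖ < Real.exp (-(K * m)) * ‖T.eval 0‖} ⊆
      (fun t : ℝ => (t : ℂ)) ⁻¹' (T.roots.toFinset : Set ℂ) ∪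
        {t | ENNReal.ofReal (K * m) ≤
          ENNReal.ofReal (Real.posLog (‖T.eval 0‖ / ‖T.eval (t : ℂ)‖))} := by
    intro t ht
    have hT : T ≠ 0 := by rintro rfl; simp at ht
    rcases eq_or_ne (T.eval (t : ℂ)) 0 with h0 | h0
    · left
      simp only [Set.mem_preimage, Finset.mem_coe, Multiset.mem_toFinset]
      exact mem_roots'.2 ⟨hT, h0⟩
    · right
      exact ENNReal.ofReal_le_ofReal (le_posLog_div_of_lt_exp_neg_mul (norm_pos_iff.2 h0) ht)
  have hroots : volume.restrict (Set.Icc (0 : ℝ) 1)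
      ((fun t : ℝ => (t : ℂ)) ⁻¹' (T.roots.toFinset : Set ℂ)) = 0 :=
    ((T.roots.toFinset.finite_toSet.preimage Complex.ofReal_injective.injOn).measure_zero _)
  refine (measure_mono hsub).trans ((measure_union_le _ _).trans ?_)
  rw [hroots, zero_add]
  refine (meas_ge_le_lintegral_div
    (Real.continuous_posLog.measurable.comp (by fun_prop)).ennreal_ofReal.aemeasurable
    (by simpa using by positivity) ENNReal.ofReal_ne_top).trans ?_
  calc _ ≤ 4 * (m : ℝ≥0∞) / ENNReal.ofReal (K * m) := by
        gcongr
        exact (lintegral_posLog_norm_eval_zero_div_norm_eval_le T).trans (by gcongr)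
    _ = ENNReal.ofReal (4 / K) := by
        rw [show (4 : ℝ≥0∞) * m = ENNReal.ofReal (4 * m) by
          rw [ENNReal.ofReal_mul (by norm_num)]; simp,
          ← ENNReal.ofReal_div_of_pos (by positivity), mul_div_mul_right _ _ hm0.ne']

lemma sum_sq_le_two_mul_sum_two_pow_mul_sq (s : Finset ℕ) (a : ℕ → ℝ) :
    (∑ k ∈ s, a k) ^ 2 ≤ 2 * ∑ k ∈ s, 2 ^ k * a k ^ 2 := by
  have hgeom : ∑ k ∈ s, (1 / 2 : ℝ) ^ k ≤ 2 :=
    (summable_geometric_two.sum_le_tsum s fun k _ => by positivity).trans_eq tsum_geometric_two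
  calc (∑ k ∈ s, a k) ^ 2 ≤ (∑ k ∈ s, (1 / 2 : ℝ) ^ k) * ∑ k ∈ s, 2 ^ k * a k ^ 2 :=
        Finset.sum_sq_le_sum_mul_sum_of_sq_le_mul s (fun _ _ => by positivity)
          (fun _ _ => by positivity) fun k _ => by
            rw [← mul_assoc, ← mul_pow]; norm_num
    _ ≤ _ := by gcongr

lemma sq_sum_mul_pow_le (s : Finset ℕ) (a : ℕ → ℝ) {t : ℝ} (ht : t ∈ Set.Icc (0 : ℝ) 1) :
    (∑ k ∈ s, a k * t ^ k) ^ 2 ≤ 2 * ∑ k ∈ s, 2 ^ k * a k ^ 2 := by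
  refine (sum_sq_le_two_mul_sum_two_pow_mul_sq _ _).trans ?_
  simp only [mul_pow]
  gcongr with k
  exact mul_le_of_le_one_right (sq_nonneg _)
    (pow_le_one₀ (pow_nonneg ht.1 k) (pow_le_one₀ ht.1 ht.2))

open Polynomial in
/-- Only the `m` low coefficients are fed to the Remez inequality, so the loss is `exp (-(K * m))`
rather than `exp (-(K * N))`; the others are paid for by the sum on the left. -/
lemma volume_setOf_sq_eval_add_tail_lt_le (Q : ℝ[X]) {N : ℕ} (hN : Q.natDegree ≤ N) (m : ℕ)
    {K : ℝ} (hK : 0 < K) :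
    volume.restrict (Set.Icc (0 : ℝ) 1)
      {t | 2 * (Q.eval t ^ 2 + 2 * ∑ k ∈ Finset.Ico (m + 1) (N + 1), 2 ^ k * Q.coeff k ^ 2) <
        Real.exp (-(K * m)) ^ 2 * Q.eval 0 ^ 2} ≤ ENNReal.ofReal (4 / K) := by
  set T : ℝ[X] := PowerSeries.trunc (m + 1) (Q : PowerSeries ℝ)
  have hT (t : ℝ) : T.eval t = ∑ k ∈ Finset.range (m + 1), Q.coeff k * t ^ k := by
    simp [T, eval, PowerSeries.eval₂_trunc_eq_sum_range]
  have hQ (t : ℝ) : Q.eval t = T.eval t + ∑ k ∈ Finset.Ico (m + 1) (N + 1), Q.coeff k * t ^ k := by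
    rw [hT, eval_eq_sum_range' (n := max (m + 1) (N + 1)) (by omega)]
    rw [← Finset.sum_range_add_sum_Ico _ (le_max_left (m + 1) (N + 1))]
    congr 2
    ext k; simp only [Finset.mem_Ico]; omega
  have hnorm (t : ℝ) : ‖(T.map (algebraMap ℝ ℂ)).eval (t : ℂ)‖ = |T.eval t| := by
    rw [← Real.norm_eq_abs, ← Complex.norm_real]
    congr 1
    exact eval_map_apply (algebraMap ℝ ℂ) t
  have hT0 : T.eval 0 = Q.eval 0 := by simp [hT, Finset.sum_range_succ', coeff_zero_eq_eval_zero]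
  have hdeg : (T.map (algebraMap ℝ ℂ)).natDegree ≤ m :=
    natDegree_map_le.trans (Nat.lt_succ_iff.1 (PowerSeries.natDegree_trunc_lt _ _))
  refine le_trans ?_ (volume_setOf_norm_eval_lt_le _ hdeg hK)
  rw [Measure.restrict_apply' measurableSet_Icc, Measure.restrict_apply' measurableSet_Icc]
  refine measure_mono fun t ⟨ht, ht01⟩ => ⟨?_, ht01⟩
  have htail := sq_sum_mul_pow_le (Finset.Ico (m + 1) (N + 1)) Q.coeff ht01
  have hzero := hnorm 0
  rw [Complex.ofReal_zero] at hzero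
  rw [Set.mem_ofPred_eq, hnorm, hzero, hT0, ← abs_of_pos (Real.exp_pos (-(K * m))), ← abs_mul,
    ← sq_lt_sq, mul_pow]
  refine lt_of_le_of_lt ?_ ht
  rw [show T.eval t = Q.eval t - ∑ k ∈ Finset.Ico (m + 1) (N + 1), Q.coeff k * t ^ k by
    rw [hQ t]; ring]
  nlinarith [sq_nonneg (Q.eval t + ∑ k ∈ Finset.Ico (m + 1) (N + 1), Q.coeff k * t ^ k)]

/-! ### Directional derivatives and restrictions to lines of multivariate polynomials -/

section LineRestrict

open MvPolynomial

variable {σ R : Type*}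

section CommSemiring

variable [CommSemiring R]

/-- The derivation `∑ i, v i • ∂ᵢ` of the polynomial ring, i.e. differentiation in direction `v`. -/
def dirDeriv (v : σ → R) : Derivation R (MvPolynomial σ R) (MvPolynomial σ R) :=
  mkDerivation R fun i => C (v i)

@[simp]
lemma dirDeriv_X (v : σ → R) (i : σ) : dirDeriv v (X i) = C (v i) :=
  mkDerivation_X ..

lemma dirDeriv_mul (v : σ → R) (p q : MvPolynomial σ R) :
    dirDeriv v (p * q) = p * dirDeriv v q + q * dirDeriv v p :=
  Derivation.leibniz _ _ _

/-- The univariate polynomial `t ↦ p (y + t v)`. -/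
def lineRestrict (p : MvPolynomial σ R) (y v : σ → R) : Polynomial R :=
  aeval (fun i => Polynomial.C (y i) + Polynomial.C (v i) * Polynomial.X) p

lemma lineRestrict_mul_X (p : MvPolynomial σ R) (y v : σ → R) (i : σ) :
    lineRestrict (p * X i) y v =
      lineRestrict p y v * (Polynomial.C (y i) + Polynomial.C (v i) * Polynomial.X) := by
  simp [lineRestrict]

lemma eval_lineRestrict (p : MvPolynomial σ R) (y v : σ → R) (t : R) :
    (lineRestrict p y v).eval t = eval (y + t • v) p := by
  induction p using MvPolynomial.induction_on with
  | C a => simp [lineRestrict]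
  | add p q hp hq => simpa [lineRestrict] using congrArg₂ (· + ·) hp hq
  | mul_X p i hp => simp [lineRestrict_mul_X, hp, mul_comm t]

lemma derivative_lineRestrict (p : MvPolynomial σ R) (y v : σ → R) :
    (lineRestrict p y v).derivative = lineRestrict (dirDeriv v p) y v := by
  induction p using MvPolynomial.induction_on with
  | C a => simp [lineRestrict]
  | add p q hp hq => simpa [lineRestrict] using congrArg₂ (· + ·) hp hq
  | mul_X p i hp =>
    rw [lineRestrict_mul_X, Polynomial.derivative_mul, hp, dirDeriv_mul]
    simp [lineRestrict]
    ring

lemma iterate_derivative_lineRestrict (p : MvPolynomial σ R) (y v : σ → R) (k : ℕ) :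
    Polynomial.derivative^[k] (lineRestrict p y v) = lineRestrict ((dirDeriv v)^[k] p) y v :=
  ((Function.Semiconj.iterate_right
    (fun q => (derivative_lineRestrict q y v).symm : Function.Semiconj (lineRestrict · y v)
      (dirDeriv v) Polynomial.derivative) k) p).symm

lemma natDegree_lineRestrict_le (p : MvPolynomial σ R) (y v : σ → R) :
    (lineRestrict p y v).natDegree ≤ p.totalDegree := by
  simpa [lineRestrict] using aeval_natDegree_le (n := 1) p le_rfl
    (fun i => Polynomial.C (y i) + Polynomial.C (v i) * Polynomial.X)
    fun i => by rw [add_comm]; exact Polynomial.natDegree_linear_le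

lemma factorial_mul_coeff_lineRestrict (p : MvPolynomial σ R) (y v : σ → R) (k : ℕ) :
    k.factorial * (lineRestrict p y v).coeff k = eval y ((dirDeriv v)^[k] p) := by
  have h := Polynomial.coeff_iterate_derivative (k := k) (lineRestrict p y v) 0
  rw [iterate_derivative_lineRestrict, Polynomial.coeff_zero_eq_eval_zero, eval_lineRestrict,
    zero_smul, add_zero, zero_add, Nat.descFactorial_self, nsmul_eq_mul] at h
  exact h.symm

lemma continuous_coeff_lineRestrict [TopologicalSpace R] [IsTopologicalSemiring R]
    (p : MvPolynomial σ R) (k : ℕ) :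
    Continuous fun z : (σ → R) × (σ → R) => (lineRestrict p z.1 z.2).coeff k := by
  induction p using MvPolynomial.induction_on generalizing k with
  | C a => simpa [lineRestrict] using continuous_const
  | add p q hp hq => simpa [lineRestrict, Pi.add_def] using (hp k).add (hq k)
  | mul_X p i hp =>
    simp only [lineRestrict_mul_X, mul_add, ← mul_assoc, Polynomial.coeff_add,
      Polynomial.coeff_mul_C]
    refine ((hp k).mul (by fun_prop)).add ?_
    cases k with
    | zero => simpa using continuous_const
    | succ k =>
      simp only [Polynomial.coeff_mul_X, Polynomial.coeff_mul_C]
      exact (hp k).mul (by fun_prop)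

end CommSemiring

lemma iterate_dirDeriv_eq_zero [CommRing R] [IsDomain R] [Infinite R] (p : MvPolynomial σ R)
    (v : σ → R) {k : ℕ} (hk : p.totalDegree < k) : (dirDeriv v)^[k] p = 0 :=
  MvPolynomial.funext fun y => by
    rw [← factorial_mul_coeff_lineRestrict, Polynomial.coeff_eq_zero_of_natDegree_lt
      ((natDegree_lineRestrict_le p y v).trans_lt hk), mul_zero, map_zero]

end LineRestrict

/-! ### The Gaussian weight -/

section Gaussian

open MvPolynomial

variable {ι : Type*}

/-- The weight `exp (-|x|²)`, the square of the Gaussian factor of the Hermite functions. -/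
def gaussWeight {E : Type*} [NormedAddCommGroup E] (x : E) : ℝ := Real.exp (-‖x‖ ^ 2)

lemma gaussWeight_pos {E : Type*} [NormedAddCommGroup E] (x : E) : 0 < gaussWeight x :=
  Real.exp_pos _

@[fun_prop]
lemma continuous_gaussWeight {E : Type*} [NormedAddCommGroup E] :
    Continuous (gaussWeight : E → ℝ) := by
  unfold gaussWeight; fun_prop

@[fun_prop]
lemma continuous_eval_ofLp {X : Type*} [TopologicalSpace X] (p : MvPolynomial ι ℝ)
    {f : X → EuclideanSpace ℝ ι} (hf : Continuous f) : Continuous fun x => eval (f x).ofLp p :=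
  (MvPolynomial.continuous_eval p).comp ((PiLp.continuous_ofLp 2 _).comp hf)

lemma hasLineDerivAt_eval (p : MvPolynomial ι ℝ) (v x : EuclideanSpace ℝ ι) :
    HasLineDerivAt ℝ (fun x : EuclideanSpace ℝ ι => eval x.ofLp p)
      (eval x.ofLp (dirDeriv v.ofLp p)) x v := by
  have h := (lineRestrict p x.ofLp v.ofLp).hasDerivAt 0
  rw [derivative_lineRestrict, eval_lineRestrict, zero_smul, add_zero] at h
  simpa only [HasLineDerivAt, WithLp.ofLp_add, WithLp.ofLp_smul, eval_lineRestrict] using h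

variable [Fintype ι]

lemma integrable_exp_neg_mul_norm_sq {b : ℝ} (hb : 0 < b) :
    Integrable fun x : EuclideanSpace ℝ ι => Real.exp (-(b * ‖x‖ ^ 2)) := by
  have h := (GaussianFourier.integrable_cexp_neg_mul_sq_norm_add (V := EuclideanSpace ℝ ι)
    (b := b) (by simpa using hb) 0 0).norm
  refine h.congr (.of_forall fun x => ?_)
  simp [Complex.norm_exp, ← Complex.ofReal_pow]

lemma integrable_eval_mul_exp_neg_mul_norm_sq (p : MvPolynomial ι ℝ) {b : ℝ} (hb : 0 < b) :
    Integrable fun x : EuclideanSpace ℝ ι => eval x.ofLp p * Real.exp (-(b * ‖x‖ ^ 2)) := by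
  induction p using MvPolynomial.induction_on generalizing b with
  | C a => simpa using (integrable_exp_neg_mul_norm_sq hb).const_mul a
  | add p q hp hq => simpa [add_mul, Pi.add_def] using (hp hb).add (hq hb)
  | mul_X p i hp =>
    refine ((hp (half_pos hb)).norm.const_mul (Real.exp (1 / (2 * b)))).mono'
      (by fun_prop) (.of_forall fun x => ?_)
    have hcoord : |x i| ≤ Real.exp ‖x‖ :=
      (PiLp.norm_apply_le x i).trans ((le_add_of_nonneg_right zero_le_one).trans
        (Real.add_one_le_exp _))
    have hsq : ‖x‖ - b * ‖x‖ ^ 2 ≤ 1 / (2 * b) - b / 2 * ‖x‖ ^ 2 := by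
      have : 1 / (2 * b) - b / 2 * ‖x‖ ^ 2 - (‖x‖ - b * ‖x‖ ^ 2) =
          (b * ‖x‖ - 1) ^ 2 / (2 * b) := by field_simp; ring
      have : 0 ≤ (b * ‖x‖ - 1) ^ 2 / (2 * b) := by positivity
      linarith
    calc ‖eval x.ofLp (p * X i) * Real.exp (-(b * ‖x‖ ^ 2))‖
        = |eval x.ofLp p| * (|x i| * Real.exp (-(b * ‖x‖ ^ 2))) := by
          simp [mul_assoc]
      _ ≤ |eval x.ofLp p| * (Real.exp ‖x‖ * Real.exp (-(b * ‖x‖ ^ 2))) := by gcongr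
      _ ≤ |eval x.ofLp p| * (Real.exp (1 / (2 * b)) * Real.exp (-(b / 2 * ‖x‖ ^ 2))) := by
          rw [← Real.exp_add, ← Real.exp_add]
          exact mul_le_mul_of_nonneg_left (Real.exp_le_exp.2 (by linarith)) (abs_nonneg _)
      _ = _ := by simp only [norm_mul, Real.norm_eq_abs, Real.abs_exp]; ring

lemma integrable_eval_mul_gaussWeight (p : MvPolynomial ι ℝ) :
    Integrable fun x : EuclideanSpace ℝ ι => eval x.ofLp p * gaussWeight x := by
  simpa [gaussWeight] using integrable_eval_mul_exp_neg_mul_norm_sq p one_pos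

/-- The integral `∫ p(x) exp (-|x|²) dx` as a linear functional of the polynomial `p`. -/
def gaussIntegral : MvPolynomial ι ℝ →ₗ[ℝ] ℝ where
  toFun p := ∫ x : EuclideanSpace ℝ ι, eval x.ofLp p * gaussWeight x
  map_add' p q := by
    simp only [map_add, add_mul]
    exact integral_add (integrable_eval_mul_gaussWeight p) (integrable_eval_mul_gaussWeight q)
  map_smul' a p := by simp [mul_assoc, integral_const_mul]

lemma gaussIntegral_apply (p : MvPolynomial ι ℝ) :
    gaussIntegral p = ∫ x : EuclideanSpace ℝ ι, eval x.ofLp p * gaussWeight x :=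
  rfl

lemma gaussIntegral_C_mul (a : ℝ) (p : MvPolynomial ι ℝ) :
    gaussIntegral (C a * p) = a * gaussIntegral p := by
  rw [← smul_eq_C_mul, map_smul, smul_eq_mul]

lemma gaussIntegral_sq_nonneg (p : MvPolynomial ι ℝ) : 0 ≤ gaussIntegral (p ^ 2) :=
  integral_nonneg fun x => by
    have := gaussWeight_pos x
    simp only [map_pow, Pi.zero_apply]
    positivity

lemma sq_gaussIntegral_mul_le (p q : MvPolynomial ι ℝ) :
    gaussIntegral (p * q) ^ 2 ≤ gaussIntegral (p ^ 2) * gaussIntegral (q ^ 2) := by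
  have h := LinearMap.BilinForm.apply_sq_le_of_symm
    ((LinearMap.mul ℝ (MvPolynomial ι ℝ)).compr₂ gaussIntegral)
    (fun x => by simpa [sq] using gaussIntegral_sq_nonneg x)
    ⟨fun x y => by simp [mul_comm x y]⟩ p q
  simpa [sq] using h

/-- The linear form `∑ i, v i * X i`. -/
def linForm (v : ι → ℝ) : MvPolynomial ι ℝ := ∑ i, C (v i) * X i

lemma eval_linForm (v x : EuclideanSpace ℝ ι) : eval x.ofLp (linForm v.ofLp) = inner ℝ v x := by
  simp [linForm, PiLp.inner_apply, mul_comm]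

lemma dirDeriv_linForm (v : EuclideanSpace ℝ ι) :
    dirDeriv v.ofLp (linForm v.ofLp) = C (‖v‖ ^ 2) := by
  have hmul (i : ι) : dirDeriv v.ofLp (C (v i) * X i) = C (v i ^ 2) := by
    rw [dirDeriv_mul, derivation_C, mul_zero, add_zero, dirDeriv_X, ← map_mul, sq]
  simp only [linForm, map_sum, hmul, EuclideanSpace.norm_sq_eq, Real.norm_eq_abs, sq_abs]

lemma hasLineDerivAt_gaussWeight {E : Type*} [NormedAddCommGroup E] [InnerProductSpace ℝ E]
    (v x : E) : HasLineDerivAt ℝ gaussWeight (-(2 * inner ℝ v x) * gaussWeight x) x v := by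
  have h := ((hasStrictFDerivAt_norm_sq x).hasFDerivAt.neg.exp).hasLineDerivAt v
  refine h.congr_deriv ?_
  simp [gaussWeight, real_inner_comm v x]
  ring

lemma gaussIntegral_dirDeriv (v : EuclideanSpace ℝ ι) (p : MvPolynomial ι ℝ) :
    gaussIntegral (dirDeriv v.ofLp p) = gaussIntegral (2 * linForm v.ofLp * p) := by
  have h := integral_bilinear_hasLineDerivAt_right_eq_neg_left_of_integrable
    (μ := (volume : Measure (EuclideanSpace ℝ ι))) (f := fun x => eval x.ofLp p)
    (f' := fun x => eval x.ofLp (dirDeriv v.ofLp p)) (g := gaussWeight)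
    (g' := fun x => -(2 * inner ℝ v x) * gaussWeight x) (v := v) (B := ContinuousLinearMap.mul ℝ ℝ)
    (by simpa using integrable_eval_mul_gaussWeight _)
    (by
      refine (integrable_eval_mul_gaussWeight (2 * linForm v.ofLp * p)).neg.congr
        (.of_forall fun x => ?_)
      simp only [map_mul, map_ofNat, eval_linForm, Pi.neg_apply, ContinuousLinearMap.mul_apply']
      ring)
    (by simpa using integrable_eval_mul_gaussWeight p)
    (fun x _ => hasLineDerivAt_eval p v x) (fun x _ => hasLineDerivAt_gaussWeight v x)
  simp only [ContinuousLinearMap.mul_apply'] at h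
  rw [gaussIntegral_apply, gaussIntegral_apply, ← neg_eq_iff_eq_neg.2 h, ← integral_neg]
  congr 1 with x
  simp only [map_mul, map_ofNat, eval_linForm]
  ring

/-- The adjoint of `dirDeriv v` with respect to the pairing `gaussIntegral (p * q)`. -/
def dirDerivAdjoint (v : ι → ℝ) (q : MvPolynomial ι ℝ) : MvPolynomial ι ℝ :=
  2 * linForm v * q - dirDeriv v q

lemma gaussIntegral_dirDeriv_mul (v : EuclideanSpace ℝ ι) (p q : MvPolynomial ι ℝ) :
    gaussIntegral (dirDeriv v.ofLp p * q) = gaussIntegral (p * dirDerivAdjoint v.ofLp q) := by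
  have h := gaussIntegral_dirDeriv v (p * q)
  rw [dirDeriv_mul, map_add, ← eq_sub_iff_add_eq', ← map_sub] at h
  rw [mul_comm, h, dirDerivAdjoint]
  congr 1
  ring

lemma dirDeriv_dirDerivAdjoint (v : EuclideanSpace ℝ ι) (q : MvPolynomial ι ℝ) :
    dirDeriv v.ofLp (dirDerivAdjoint v.ofLp q) =
      C (2 * ‖v‖ ^ 2) * q + dirDerivAdjoint v.ofLp (dirDeriv v.ofLp q) := by
  have h2 : (2 : MvPolynomial ι ℝ) = C 2 := (map_ofNat C 2).symm
  simp only [dirDerivAdjoint, map_sub, dirDeriv_mul, dirDeriv_linForm, map_mul, h2, derivation_C]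
  ring

lemma gaussIntegral_sq_dirDerivAdjoint (v : EuclideanSpace ℝ ι) (q : MvPolynomial ι ℝ) :
    gaussIntegral (dirDerivAdjoint v.ofLp q ^ 2) =
      2 * ‖v‖ ^ 2 * gaussIntegral (q ^ 2) + gaussIntegral (dirDeriv v.ofLp q ^ 2) := by
  rw [sq, ← gaussIntegral_dirDeriv_mul, dirDeriv_dirDerivAdjoint, add_mul, map_add, mul_assoc,
    ← sq, gaussIntegral_C_mul, mul_comm _ q, ← gaussIntegral_dirDeriv_mul, sq (dirDeriv v.ofLp q)]

lemma gaussIntegral_sq_dirDeriv_le (v : EuclideanSpace ℝ ι) {N : ℕ} {p : MvPolynomial ι ℝ}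
    (hp : (dirDeriv v.ofLp)^[N + 1] p = 0) :
    gaussIntegral (dirDeriv v.ofLp p ^ 2) ≤ 2 * N * ‖v‖ ^ 2 * gaussIntegral (p ^ 2) := by
  induction N generalizing p with
  | zero =>
    rw [zero_add, Function.iterate_one] at hp
    simp [hp]
  | succ N ih =>
    have hD := ih (p := dirDeriv v.ofLp p) (by rwa [Function.iterate_succ_apply] at hp)
    have hcs := sq_gaussIntegral_mul_le p (dirDerivAdjoint v.ofLp (dirDeriv v.ofLp p))
    rw [← gaussIntegral_dirDeriv_mul, ← sq, gaussIntegral_sq_dirDerivAdjoint] at hcs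
    have hp0 := gaussIntegral_sq_nonneg p
    rcases (gaussIntegral_sq_nonneg (dirDeriv v.ofLp p)).eq_or_lt with hDp | hDp
    · rw [← hDp]; positivity
    · refine le_of_mul_le_mul_right ?_ hDp
      calc gaussIntegral (dirDeriv v.ofLp p ^ 2) * gaussIntegral (dirDeriv v.ofLp p ^ 2)
          ≤ gaussIntegral (p ^ 2) * (2 * ‖v‖ ^ 2 * gaussIntegral (dirDeriv v.ofLp p ^ 2) +
              2 * N * ‖v‖ ^ 2 * gaussIntegral (dirDeriv v.ofLp p ^ 2)) := by
            rw [← sq]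
            exact hcs.trans (by gcongr)
        _ = _ := by push_cast; ring

lemma gaussIntegral_sq_iterate_dirDeriv_le (v : EuclideanSpace ℝ ι) {N : ℕ}
    {p : MvPolynomial ι ℝ} (hp : p.totalDegree ≤ N) (k : ℕ) :
    gaussIntegral ((dirDeriv v.ofLp)^[k] p ^ 2) ≤
      (2 * N * ‖v‖ ^ 2) ^ k * gaussIntegral (p ^ 2) := by
  induction k with
  | zero => simp
  | succ k ih =>
    have hnil : (dirDeriv v.ofLp)^[N + 1] ((dirDeriv v.ofLp)^[k] p) = 0 := by
      rw [← Function.iterate_add_apply]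
      exact iterate_dirDeriv_eq_zero p v.ofLp (by omega)
    calc gaussIntegral ((dirDeriv v.ofLp)^[k + 1] p ^ 2)
        ≤ 2 * N * ‖v‖ ^ 2 * gaussIntegral ((dirDeriv v.ofLp)^[k] p ^ 2) := by
          rw [Function.iterate_succ_apply']
          exact gaussIntegral_sq_dirDeriv_le v hnil
      _ ≤ 2 * N * ‖v‖ ^ 2 * ((2 * N * ‖v‖ ^ 2) ^ k * gaussIntegral (p ^ 2)) := by gcongr
      _ = _ := by ring

lemma gaussIntegral_sq_linForm_mul_le (v : EuclideanSpace ℝ ι) {N : ℕ} {p : MvPolynomial ι ℝ}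
    (hp : p.totalDegree ≤ N) :
    gaussIntegral ((linForm v.ofLp * p) ^ 2) ≤ (2 * N + 1) * ‖v‖ ^ 2 * gaussIntegral (p ^ 2) := by
  have hD := gaussIntegral_sq_iterate_dirDeriv_le v hp 1
  rw [pow_one, Function.iterate_one] at hD
  have hA := gaussIntegral_sq_dirDerivAdjoint v p
  have hpar : (4 : ℝ) • (linForm v.ofLp * p) ^ 2 +
      (dirDerivAdjoint v.ofLp p - dirDeriv v.ofLp p) ^ 2 =
        (2 : ℝ) • dirDerivAdjoint v.ofLp p ^ 2 + (2 : ℝ) • dirDeriv v.ofLp p ^ 2 := by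
    simp only [dirDerivAdjoint, smul_eq_C_mul, map_ofNat]
    ring
  have h := congrArg gaussIntegral hpar
  simp only [map_add, map_smul, smul_eq_mul] at h
  linarith [gaussIntegral_sq_nonneg (dirDerivAdjoint v.ofLp p - dirDeriv v.ofLp p)]

/-- The density `p(x)² exp (-|x|²)`. -/
def gaussDensity (p : MvPolynomial ι ℝ) (x : EuclideanSpace ℝ ι) : ℝ :=
  eval x.ofLp p ^ 2 * gaussWeight x

lemma gaussDensity_nonneg (p : MvPolynomial ι ℝ) (x : EuclideanSpace ℝ ι) :
    0 ≤ gaussDensity p x :=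
  mul_nonneg (sq_nonneg _) (gaussWeight_pos x).le

lemma continuous_gaussDensity (p : MvPolynomial ι ℝ) : Continuous (gaussDensity p) := by
  unfold gaussDensity; fun_prop

lemma integrable_gaussDensity (p : MvPolynomial ι ℝ) : Integrable (gaussDensity p) :=
  (integrable_eval_mul_gaussWeight (p ^ 2)).congr (.of_forall fun x => by
    simp only [map_pow, gaussDensity])

/-- The mass `∫ₛ p(x)² exp (-|x|²) dx` of `p` on the set `s`. -/
def gaussMass (p : MvPolynomial ι ℝ) (s : Set (EuclideanSpace ℝ ι)) : ℝ :=
  ∫ x in s, gaussDensity p x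

lemma gaussMass_nonneg (p : MvPolynomial ι ℝ) (s : Set (EuclideanSpace ℝ ι)) :
    0 ≤ gaussMass p s :=
  integral_nonneg (gaussDensity_nonneg p)

lemma gaussMass_univ (p : MvPolynomial ι ℝ) : gaussMass p Set.univ = gaussIntegral (p ^ 2) := by
  simp [gaussMass, gaussDensity, gaussIntegral_apply]

lemma ofReal_gaussMass (p : MvPolynomial ι ℝ) (s : Set (EuclideanSpace ℝ ι)) :
    ENNReal.ofReal (gaussMass p s) = ∫⁻ x in s, ENNReal.ofReal (gaussDensity p x) :=
  ofReal_integral_eq_lintegral_ofReal (integrable_gaussDensity p).restrict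
    (.of_forall (gaussDensity_nonneg p))

end Gaussian

/-! ### Thick sets and rays -/

section Covering

open Module

variable {E : Type*} [NormedAddCommGroup E] [MeasurableSpace E] (μ : Measure E)

/-- The measure on pairs `(v, t)` of a direction `v` in the ball of radius `2 r` and a time `t` in
`[0, 1]`, used to average over the segments `t ↦ y + t v`. -/
def rayMeasure (r : ℝ) : Measure (E × ℝ) :=
  (μ.restrict (Metric.ball 0 (2 * r))).prod (volume.restrict (Set.Icc 0 1))

instance [SFinite μ] (r : ℝ) : SFinite (rayMeasure μ r) := by
  unfold rayMeasure; infer_instance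

lemma rayMeasure_univ (r : ℝ) : rayMeasure μ r Set.univ = μ (Metric.ball 0 (2 * r)) := by
  rw [rayMeasure, ← Set.univ_prod_univ, Measure.prod_prod]
  simp

lemma ae_rayMeasure [OpensMeasurableSpace E] [SFinite μ] (r : ℝ) :
    ∀ᵐ z ∂rayMeasure μ r, ‖z.1‖ ≤ 2 * r ∧ z.2 ∈ Set.Icc (0 : ℝ) 1 := by
  rw [rayMeasure, Measure.prod_restrict]
  filter_upwards [ae_restrict_mem (measurableSet_ball.prod measurableSet_Icc)] with z hz
  exact ⟨(mem_ball_zero_iff.1 hz.1).le, hz.2⟩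

variable [NormedSpace ℝ E]

/-- The pairs `(v, t)` for which `y + t v` lies in `ω`. -/
def raySet (ω : Set E) (y : E) : Set (E × ℝ) := {z | y + z.2 • z.1 ∈ ω}

lemma measurableSet_raySet [BorelSpace E] [SecondCountableTopology E] {ω : Set E}
    (hω : MeasurableSet ω) (y : E) : MeasurableSet (raySet ω y) :=
  (by fun_prop : Measurable fun z : E × ℝ => y + z.2 • z.1) hω

variable [FiniteDimensional ℝ E] [BorelSpace E] [μ.IsAddHaarMeasure]

lemma measure_ball_le_of_thick {γ : ℝ≥0∞} {ω : Set E} (hω : MeasurableSet ω) {ρ : E → ℝ}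
    (hρ : ∀ x, 0 < ρ x)
    (hth : ∀ x, γ * μ (Metric.ball x (ρ x)) ≤ μ (ω ∩ Metric.ball x (ρ x))) {y : E} {s M : ℝ}
    (hM : ∀ x ∈ Metric.ball y s, ρ x ≤ M) :
    γ * μ (Metric.ball y s) ≤ 5 ^ finrank ℝ E * μ (ω ∩ Metric.ball y (s + M)) := by
  obtain ⟨u, hut, hdisj, hcov⟩ :=
    Vitali.exists_disjoint_subfamily_covering_enlargement_closedBall (Metric.ball y s)
      (fun x : E => x) ρ M hM 5 (by norm_num)
  have hu : u.Countable := hdisj.countable_of_nonempty_interior fun x _ =>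
    ⟨x, Metric.ball_subset_interior_closedBall (Metric.mem_ball_self (hρ x))⟩
  have hcover : Metric.ball y s ⊆ ⋃ b ∈ u, Metric.closedBall b (5 * ρ b) := fun x hx =>
    let ⟨_, hb, hsub⟩ := hcov x hx
    Set.mem_biUnion hb (hsub (Metric.mem_closedBall_self (hρ x).le))
  have hdilate (b : E) : μ (Metric.closedBall b (5 * ρ b)) =
      5 ^ finrank ℝ E * μ (Metric.ball b (ρ b)) := by
    have hb := hρ b
    rw [Measure.addHaar_closedBall _ _ (by positivity), Measure.addHaar_ball_of_pos _ _ hb,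
      mul_pow, ENNReal.ofReal_mul (by positivity), mul_assoc]
    norm_num [ENNReal.ofReal_pow]
  calc γ * μ (Metric.ball y s)
      ≤ γ * ∑' b : u, μ (Metric.closedBall (b : E) (5 * ρ b)) := by
        gcongr
        exact (measure_mono hcover).trans (measure_biUnion_le _ hu _)
    _ = 5 ^ finrank ℝ E * ∑' b : u, γ * μ (Metric.ball (b : E) (ρ b)) := by
        simp only [hdilate, ENNReal.tsum_mul_left]
        ring
    _ ≤ 5 ^ finrank ℝ E * ∑' b : u, μ (ω ∩ Metric.ball (b : E) (ρ b)) := by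
        gcongr with b
        exact hth b
    _ = 5 ^ finrank ℝ E * μ (⋃ b ∈ u, ω ∩ Metric.ball b (ρ b)) := by
        rw [measure_biUnion hu
          (fun a ha b hb hab => (hdisj ha hb hab).mono
            (Set.inter_subset_right.trans Metric.ball_subset_closedBall)
            (Set.inter_subset_right.trans Metric.ball_subset_closedBall))
          fun b _ => hω.inter measurableSet_ball]
    _ ≤ 5 ^ finrank ℝ E * μ (ω ∩ Metric.ball y (s + M)) := by
        gcongr
        refine Set.iUnion₂_subset fun b hb =>
          Set.inter_subset_inter_right _ (Metric.ball_subset_ball' ?_)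
        linarith [hM b (hut hb), Metric.mem_ball.1 (hut hb)]

lemma measure_inter_ball_le_ray_slice (ω : Set E) (y : E) (r : ℝ) {t : ℝ}
    (ht : t ∈ Set.Icc (1 / 2 : ℝ) 1) :
    μ (ω ∩ Metric.ball y r) ≤ μ ({v | y + t • v ∈ ω} ∩ Metric.ball 0 (2 * r)) := by
  have ht0 : 0 < t := by linarith [ht.1]
  calc μ (ω ∩ Metric.ball y r)
      = μ ((fun u => y + u) ⁻¹' (ω ∩ Metric.ball y r)) := (measure_preimage_add _ _ _).symm
    _ ≤ μ ((t • ·) ⁻¹' ((fun u => y + u) ⁻¹' (ω ∩ Metric.ball y r))) := by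
        rw [Measure.addHaar_preimage_smul _ ht0.ne']
        refine le_mul_of_one_le_left zero_le ?_
        rw [ENNReal.one_le_ofReal, abs_of_pos (by positivity)]
        exact (one_le_inv₀ (by positivity)).2 (pow_le_one₀ ht0.le ht.2)
    _ ≤ _ := by
        refine measure_mono fun v hv => ⟨hv.1, ?_⟩
        have hball : y + t • v ∈ Metric.ball y r := hv.2
        rw [Metric.mem_ball, dist_self_add_left, norm_smul, Real.norm_of_nonneg ht0.le] at hball
        rw [mem_ball_zero_iff]
        nlinarith [norm_nonneg v, ht.1]

lemma measure_inter_ball_le_rayMeasure {ω : Set E} (hω : MeasurableSet ω) (y : E) (r : ℝ) :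
    2⁻¹ * μ (ω ∩ Metric.ball y r) ≤ rayMeasure μ r (raySet ω y) := by
  have hmeas := measurableSet_raySet hω y
  rw [rayMeasure, Measure.prod_apply_symm hmeas]
  calc 2⁻¹ * μ (ω ∩ Metric.ball y r)
      = ∫⁻ _ in Set.Icc (1 / 2 : ℝ) 1, μ (ω ∩ Metric.ball y r) := by
        rw [setLIntegral_const, Real.volume_Icc, mul_comm]
        norm_num [ENNReal.ofReal_div_of_pos]
    _ ≤ ∫⁻ t in Set.Icc (1 / 2 : ℝ) 1,
          (μ.restrict (Metric.ball 0 (2 * r))) ((fun v => (v, t)) ⁻¹' raySet ω y) := by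
        refine setLIntegral_mono' measurableSet_Icc fun t ht => ?_
        rw [Measure.restrict_apply (hmeas.preimage (by fun_prop))]
        exact measure_inter_ball_le_ray_slice μ ω y r ht
    _ ≤ _ := lintegral_mono_set (Set.Icc_subset_Icc (by norm_num) le_rfl)

lemma lintegral_lintegral_rayMeasure (r : ℝ) {F : E → ℝ≥0∞} (hF : Measurable F) :
    ∫⁻ y, ∫⁻ z, F (y + z.2 • z.1) ∂rayMeasure μ r ∂μ =
      (∫⁻ y, F y ∂μ) * μ (Metric.ball 0 (2 * r)) := by
  have hmeas : Measurable fun z : E × (E × ℝ) => F (z.1 + z.2.2 • z.2.1) :=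
    hF.comp (by fun_prop)
  rw [lintegral_lintegral_swap hmeas.aemeasurable]
  simp [lintegral_add_right_eq_self F, rayMeasure_univ]

end Covering

/-! ### Propagation of the Gaussian mass along rays -/

lemma sum_Ico_sq_pow_div_factorial_le {x B : ℝ} (hx : 0 ≤ x) (hB : 1 ≤ B) (m N : ℕ) :
    ∑ k ∈ Finset.Ico (m + 1) (N + 1), (x ^ k / k.factorial) ^ 2 ≤
      (Real.exp (B * x) / B ^ m) ^ 2 := by
  have : 0 < B := by linarith
  refine (Finset.sum_sq_le_sq_sum_of_nonneg fun k _ => by positivity).trans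
    (pow_le_pow_left₀ (by positivity) ?_ 2)
  rw [le_div_iff₀ (by positivity), Finset.sum_mul]
  calc ∑ k ∈ Finset.Ico (m + 1) (N + 1), x ^ k / k.factorial * B ^ m
      ≤ ∑ k ∈ Finset.Ico (m + 1) (N + 1), (B * x) ^ k / k.factorial := by
        refine Finset.sum_le_sum fun k hk => ?_
        rw [mul_pow, div_mul_eq_mul_div, mul_comm (B ^ k)]
        have : B ^ m ≤ B ^ k :=
          pow_le_pow_right₀ hB (Nat.le_of_succ_le (Finset.mem_Ico.1 hk).1)
        gcongr
    _ ≤ ∑ k ∈ Finset.range (N + 1), (B * x) ^ k / k.factorial :=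
        Finset.sum_le_sum_of_subset_of_nonneg
          (fun k hk => Finset.mem_range.2 (Finset.mem_Ico.1 hk).2) fun k _ _ => by positivity
    _ ≤ Real.exp (B * x) := Real.sum_le_exp_of_nonneg (by positivity) _

lemma exists_nat_sum_Ico_sq_pow_div_factorial_le {x K δ : ℝ} (hx : 0 ≤ x) (hK : 0 ≤ K)
    (hδ : 0 < δ) (hδ1 : δ ≤ 1) :
    ∃ m : ℕ, (m : ℝ) ≤ Real.exp (1 + K) / δ * x + 2 ∧
      ∀ N, ∑ k ∈ Finset.Ico (m + 1) (N + 1), (x ^ k / k.factorial) ^ 2 ≤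
        (δ * Real.exp (-(K * m))) ^ 2 := by
  set B := Real.exp (1 + K) / δ with hBdef
  have hB : 1 ≤ B := (one_le_div hδ).2 (hδ1.trans (Real.one_le_exp (by positivity)))
  refine ⟨⌈B * x⌉₊ + 1, ?_, fun N => (sum_Ico_sq_pow_div_factorial_le hx hB _ N).trans
    (pow_le_pow_left₀ (by positivity) ?_ 2)⟩
  · push_cast
    linarith [Nat.ceil_lt_add_one (a := B * x) (by positivity)]
  · set m := ⌈B * x⌉₊ + 1 with hm
    have hmx : B * x ≤ m := (Nat.le_ceil _).trans (by simp [hm])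
    have hpow : B ^ m = Real.exp m * Real.exp (K * m) / δ ^ m := by
      rw [hBdef, div_pow, ← Real.exp_nat_mul, ← Real.exp_add]
      congr 2
      ring
    calc Real.exp (B * x) / B ^ m
        ≤ Real.exp m / B ^ m := by gcongr
      _ = δ ^ m * Real.exp (-(K * m)) := by
          rw [hpow, Real.exp_neg]
          field_simp
      _ ≤ δ * Real.exp (-(K * m)) := by
          gcongr
          exact pow_le_of_le_one hδ.le hδ1 (by simp [hm])

section RayEstimate

open MvPolynomial

variable {ι : Type*}

/-- The weighted sum of squares of the Taylor coefficients of order `m < k ≤ N` of `t ↦ p (y + t v)`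
at `0`, as a polynomial in `y`; by Cauchy–Schwarz it dominates the square of the Taylor remainder
for `t ∈ [0, 1]`. -/
def taylorTail (p : MvPolynomial ι ℝ) (m N : ℕ) (v : ι → ℝ) : MvPolynomial ι ℝ :=
  ∑ k ∈ Finset.Ico (m + 1) (N + 1), C (2 ^ (k + 1) / (k.factorial : ℝ) ^ 2) * (dirDeriv v)^[k] p ^ 2

lemma eval_taylorTail (p : MvPolynomial ι ℝ) (m N : ℕ) (v y : ι → ℝ) :
    eval y (taylorTail p m N v) =
      2 * ∑ k ∈ Finset.Ico (m + 1) (N + 1), 2 ^ k * (lineRestrict p y v).coeff k ^ 2 := by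
  rw [taylorTail, map_sum, Finset.mul_sum]
  refine Finset.sum_congr rfl fun k _ => ?_
  have hk : (k.factorial : ℝ) ≠ 0 := mod_cast k.factorial_ne_zero
  rw [map_mul, eval_C, map_pow, ← factorial_mul_coeff_lineRestrict]
  field_simp
  ring

lemma eval_taylorTail_nonneg (p : MvPolynomial ι ℝ) (m N : ℕ) (v y : ι → ℝ) :
    0 ≤ eval y (taylorTail p m N v) := by
  rw [eval_taylorTail]; positivity

lemma continuous_eval_taylorTail (p : MvPolynomial ι ℝ) (m N : ℕ) :
    Continuous fun z : (ι → ℝ) × (ι → ℝ) => eval z.1 (taylorTail p m N z.2) := by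
  simp only [eval_taylorTail]
  refine continuous_const.mul (continuous_finsetSum _ fun k _ => continuous_const.mul ?_)
  exact (continuous_coeff_lineRestrict p k).pow 2

@[fun_prop]
lemma continuous_eval_taylorTail_ofLp {X : Type*} [TopologicalSpace X] (p : MvPolynomial ι ℝ)
    (m N : ℕ) {f g : X → EuclideanSpace ℝ ι} (hf : Continuous f) (hg : Continuous g) :
    Continuous fun x => eval (f x).ofLp (taylorTail p m N (g x).ofLp) := by
  have hfg : Continuous fun x => ((f x).ofLp, (g x).ofLp) := by fun_prop
  have h := (continuous_eval_taylorTail p m N).comp hfg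
  exact h

variable [Fintype ι]

lemma gaussIntegral_taylorTail_le {p : MvPolynomial ι ℝ} {N : ℕ} (hp : p.totalDegree ≤ N) (m : ℕ)
    {v : EuclideanSpace ℝ ι} {r : ℝ} (hv : ‖v‖ ≤ 2 * r) :
    gaussIntegral (taylorTail p m N v.ofLp) ≤
      2 * (∑ k ∈ Finset.Ico (m + 1) (N + 1), ((4 * r * √N) ^ k / k.factorial) ^ 2) *
        gaussIntegral (p ^ 2) := by
  rw [taylorTail, map_sum, Finset.mul_sum, Finset.sum_mul]
  refine Finset.sum_le_sum fun k _ => ?_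
  have hx : (4 * r * √N) ^ 2 = 2 * (2 * N * (2 * r) ^ 2) := by
    rw [mul_pow, Real.sq_sqrt (by positivity)]; ring
  have := gaussIntegral_sq_nonneg p
  rw [gaussIntegral_C_mul]
  calc 2 ^ (k + 1) / (k.factorial : ℝ) ^ 2 * gaussIntegral ((dirDeriv v.ofLp)^[k] p ^ 2)
      ≤ 2 ^ (k + 1) / (k.factorial : ℝ) ^ 2 *
          ((2 * N * (2 * r) ^ 2) ^ k * gaussIntegral (p ^ 2)) := by
        gcongr
        exact (gaussIntegral_sq_iterate_dirDeriv_le v hp k).trans (by gcongr)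
    _ = _ := by
        rw [div_pow, ← pow_mul, mul_comm k 2, pow_mul, hx, mul_pow 2 (2 * (N : ℝ) * (2 * r) ^ 2)]
        ring

lemma rayMeasure_setOf_lt_le {p : MvPolynomial ι ℝ} {N : ℕ} (hp : p.totalDegree ≤ N) (m : ℕ)
    {K : ℝ} (hK : 0 < K) (y : EuclideanSpace ℝ ι) (r : ℝ) :
    rayMeasure volume r {z | 2 * (eval (y + z.2 • z.1).ofLp p ^ 2 +
        eval y.ofLp (taylorTail p m N z.1.ofLp)) < Real.exp (-(K * m)) ^ 2 * eval y.ofLp p ^ 2} ≤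
      ENNReal.ofReal (4 / K) * volume (Metric.ball (0 : EuclideanSpace ℝ ι) (2 * r)) := by
  rw [rayMeasure, Measure.prod_apply (isOpen_lt (by fun_prop) (by fun_prop)).measurableSet,
    ← setLIntegral_const]
  refine lintegral_mono fun v => ?_
  have h := volume_setOf_sq_eval_add_tail_lt_le (lineRestrict p y.ofLp v.ofLp)
    ((natDegree_lineRestrict_le p _ _).trans hp) m hK
  simpa only [Set.preimage_ofPred_eq, eval_lineRestrict, eval_taylorTail, zero_smul, add_zero,
    WithLp.ofLp_add, WithLp.ofLp_smul] using h

lemma ofReal_sq_eval_mul_volume_le_lintegral {p : MvPolynomial ι ℝ} {N : ℕ}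
    (hp : p.totalDegree ≤ N) (m : ℕ) (ω : Set (EuclideanSpace ℝ ι))
    {y : EuclideanSpace ℝ ι} {r θ : ℝ} (hθ : 0 < θ)
    (hω : ENNReal.ofReal θ * volume (Metric.ball (0 : EuclideanSpace ℝ ι) (2 * r)) ≤
      rayMeasure volume r (raySet ω y)) :
    ENNReal.ofReal (θ / 2 * Real.exp (-(8 / θ * m)) ^ 2 * eval y.ofLp p ^ 2) *
        volume (Metric.ball (0 : EuclideanSpace ℝ ι) (2 * r)) ≤
      ∫⁻ z in raySet ω y, ENNReal.ofReal (2 * (eval (y + z.2 • z.1).ofLp p ^ 2 +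
        eval y.ofLp (taylorTail p m N z.1.ofLp))) ∂rayMeasure volume r := by
  set V := volume (Metric.ball (0 : EuclideanSpace ℝ ι) (2 * r))
  set level := Real.exp (-(8 / θ * m)) ^ 2 * eval y.ofLp p ^ 2
  set bad : Set (EuclideanSpace ℝ ι × ℝ) := {z | 2 * (eval (y + z.2 • z.1).ofLp p ^ 2 +
    eval y.ofLp (taylorTail p m N z.1.ofLp)) < level}
  have hbad : rayMeasure volume r bad ≤ ENNReal.ofReal (θ / 2) * V := by
    have h := rayMeasure_setOf_lt_le hp m (by positivity : 0 < 8 / θ) y r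
    rwa [show 4 / (8 / θ) = θ / 2 by field_simp; norm_num] at h
  have hgood : ENNReal.ofReal (θ / 2) * V ≤ rayMeasure volume r (raySet ω y \ bad) := by
    refine le_trans ?_ le_measure_sdiff
    refine ENNReal.le_sub_of_add_le_right (ne_top_of_le_ne_top
      (ENNReal.mul_ne_top ENNReal.ofReal_ne_top measure_ball_lt_top.ne) hbad) ?_
    calc _ ≤ ENNReal.ofReal (θ / 2) * V + ENNReal.ofReal (θ / 2) * V := by gcongr
      _ = ENNReal.ofReal θ * V := by
          rw [← add_mul, ← ENNReal.ofReal_add (by positivity) (by positivity), add_halves]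
      _ ≤ _ := hω
  calc ENNReal.ofReal (θ / 2 * Real.exp (-(8 / θ * m)) ^ 2 * eval y.ofLp p ^ 2) * V
      = ENNReal.ofReal level * (ENNReal.ofReal (θ / 2) * V) := by
        rw [← mul_assoc, ← ENNReal.ofReal_mul (by positivity), mul_assoc (θ / 2), mul_comm (θ / 2)]
    _ ≤ ENNReal.ofReal level * rayMeasure volume r (raySet ω y \ bad) := by gcongr
    _ ≤ ENNReal.ofReal level * (rayMeasure volume r).restrict (raySet ω y)
          {z | ENNReal.ofReal level ≤ ENNReal.ofReal (2 * (eval (y + z.2 • z.1).ofLp p ^ 2 +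
            eval y.ofLp (taylorTail p m N z.1.ofLp)))} := by
        refine mul_le_mul' le_rfl (le_trans ?_ (Measure.le_restrict_apply ..))
        exact measure_mono fun z hz => ⟨ENNReal.ofReal_le_ofReal (not_lt.1 hz.2), hz.1⟩
    _ ≤ _ := mul_meas_ge_le_lintegral (Continuous.measurable (by fun_prop)).ennreal_ofReal _

lemma gaussWeight_le_exp_mul_gaussWeight_add_smul {E : Type*} [NormedAddCommGroup E]
    [NormedSpace ℝ E] {y v : E} {r ρ₀ t : ℝ} (hy : ‖y‖ ≤ ρ₀) (hv : ‖v‖ ≤ 2 * r)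
    (ht : t ∈ Set.Icc (0 : ℝ) 1) :
    gaussWeight y ≤ Real.exp (4 * ρ₀ * r + 4 * r ^ 2) * gaussWeight (y + t • v) := by
  have hr : 0 ≤ r := by linarith [norm_nonneg v]
  have hyv : ‖y + t • v‖ ≤ ‖y‖ + 2 * r := by
    refine (norm_add_le _ _).trans ?_
    rw [norm_smul, Real.norm_of_nonneg ht.1]
    linarith [mul_le_of_le_one_left (norm_nonneg v) ht.2]
  have hsq : ‖y + t • v‖ ^ 2 ≤ (‖y‖ + 2 * r) ^ 2 := by gcongr
  have : ‖y‖ * r ≤ ρ₀ * r := by gcongr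
  rw [gaussWeight, gaussWeight, ← Real.exp_add, Real.exp_le_exp]
  linarith

lemma ofReal_gaussDensity_mul_volume_le_lintegral {p : MvPolynomial ι ℝ} {N : ℕ}
    (hp : p.totalDegree ≤ N) (m : ℕ) {ω : Set (EuclideanSpace ℝ ι)} (hω : MeasurableSet ω)
    {y : EuclideanSpace ℝ ι} {r ρ₀ θ : ℝ} (hθ : 0 < θ) (hy : ‖y‖ ≤ ρ₀)
    (hray : ENNReal.ofReal θ * volume (Metric.ball (0 : EuclideanSpace ℝ ι) (2 * r)) ≤
      rayMeasure volume r (raySet ω y)) :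
    ENNReal.ofReal (θ / 2 * Real.exp (-(8 / θ * m)) ^ 2) * ENNReal.ofReal (gaussDensity p y) *
        volume (Metric.ball (0 : EuclideanSpace ℝ ι) (2 * r)) ≤
      ∫⁻ z, ω.indicator (fun x => ENNReal.ofReal (2 * Real.exp (4 * ρ₀ * r + 4 * r ^ 2) *
          gaussDensity p x)) (y + z.2 • z.1) ∂rayMeasure volume r +
        ∫⁻ z : EuclideanSpace ℝ ι × ℝ,
          ENNReal.ofReal (2 * (eval y.ofLp (taylorTail p m N z.1.ofLp) * gaussWeight y))
          ∂rayMeasure volume r := by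
  calc ENNReal.ofReal (θ / 2 * Real.exp (-(8 / θ * m)) ^ 2) * ENNReal.ofReal (gaussDensity p y) *
        volume (Metric.ball (0 : EuclideanSpace ℝ ι) (2 * r))
      = ENNReal.ofReal (θ / 2 * Real.exp (-(8 / θ * m)) ^ 2 * eval y.ofLp p ^ 2) *
          volume (Metric.ball (0 : EuclideanSpace ℝ ι) (2 * r)) *
          ENNReal.ofReal (gaussWeight y) := by
        rw [gaussDensity, ENNReal.ofReal_mul (sq_nonneg _),
          ENNReal.ofReal_mul (q := eval y.ofLp p ^ 2) (by positivity)]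
        ring
    _ ≤ (∫⁻ z in raySet ω y, ENNReal.ofReal (2 * (eval (y + z.2 • z.1).ofLp p ^ 2 +
          eval y.ofLp (taylorTail p m N z.1.ofLp))) ∂rayMeasure volume r) *
          ENNReal.ofReal (gaussWeight y) := by
        gcongr
        exact ofReal_sq_eval_mul_volume_le_lintegral hp m ω hθ hray
    _ ≤ _ := by
        rw [← lintegral_mul_const' _ _ ENNReal.ofReal_ne_top,
          ← lintegral_indicator (measurableSet_raySet hω y),
          ← lintegral_add_right _ (Continuous.measurable (by fun_prop)).ennreal_ofReal]
        refine lintegral_mono_ae ?_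
        filter_upwards [ae_rayMeasure volume r] with z ⟨hv, ht⟩
        refine Set.indicator_apply_le' (fun hz => ?_) fun _ => zero_le
        have hzω : y + z.2 • z.1 ∈ ω := hz
        have htail := eval_taylorTail_nonneg p m N z.1.ofLp y.ofLp
        have hweight := mul_le_mul_of_nonneg_left
          (gaussWeight_le_exp_mul_gaussWeight_add_smul hy hv ht)
          (sq_nonneg (eval (y + z.2 • z.1).ofLp p))
        have := gaussWeight_pos y
        have := gaussDensity_nonneg p (y + z.2 • z.1)
        rw [Set.indicator_of_mem hzω, ← ENNReal.ofReal_mul (by positivity),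
          ← ENNReal.ofReal_add (by positivity) (by positivity)]
        refine ENNReal.ofReal_le_ofReal ?_
        rw [gaussDensity]
        linarith

lemma lintegral_lintegral_indicator_gaussDensity (p : MvPolynomial ι ℝ)
    {ω : Set (EuclideanSpace ℝ ι)} (hω : MeasurableSet ω) (r : ℝ) {a : ℝ} (ha : 0 ≤ a) :
    ∫⁻ y, ∫⁻ z, ω.indicator (fun x => ENNReal.ofReal (a * gaussDensity p x)) (y + z.2 • z.1)
        ∂rayMeasure volume r =
      ENNReal.ofReal (a * gaussMass p ω) *
        volume (Metric.ball (0 : EuclideanSpace ℝ ι) (2 * r)) := by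
  have hmeas : Measurable fun x => ENNReal.ofReal (a * gaussDensity p x) :=
    ((continuous_gaussDensity p).measurable.const_mul a).ennreal_ofReal
  rw [lintegral_lintegral_rayMeasure volume r (hmeas.indicator hω), lintegral_indicator hω]
  simp only [ENNReal.ofReal_mul ha]
  rw [lintegral_const_mul' _ _ ENNReal.ofReal_ne_top, ofReal_gaussMass]

lemma measurable_taylorTail_mul_gaussWeight (p : MvPolynomial ι ℝ) (m N : ℕ) :
    Measurable fun x : EuclideanSpace ℝ ι × (EuclideanSpace ℝ ι × ℝ) =>
      ENNReal.ofReal (2 * (eval x.1.ofLp (taylorTail p m N x.2.1.ofLp) * gaussWeight x.1)) :=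
  (Continuous.measurable (by fun_prop)).ennreal_ofReal

lemma lintegral_lintegral_taylorTail_le {p : MvPolynomial ι ℝ} {N : ℕ} (hp : p.totalDegree ≤ N)
    {m : ℕ} {r S : ℝ}
    (hS : ∑ k ∈ Finset.Ico (m + 1) (N + 1), ((4 * r * √N) ^ k / k.factorial) ^ 2 ≤ S) :
    ∫⁻ y : EuclideanSpace ℝ ι, ∫⁻ z : EuclideanSpace ℝ ι × ℝ,
        ENNReal.ofReal (2 * (eval y.ofLp (taylorTail p m N z.1.ofLp) * gaussWeight y))
        ∂rayMeasure volume r ≤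
      ENNReal.ofReal (4 * S * gaussIntegral (p ^ 2)) *
        volume (Metric.ball (0 : EuclideanSpace ℝ ι) (2 * r)) := by
  rw [lintegral_lintegral_swap (measurable_taylorTail_mul_gaussWeight p m N).aemeasurable,
    ← rayMeasure_univ, ← lintegral_const]
  refine lintegral_mono_ae ?_
  filter_upwards [ae_rayMeasure volume r] with z ⟨hv, _⟩
  rw [← ofReal_integral_eq_lintegral_ofReal
    ((integrable_eval_mul_gaussWeight _).const_mul 2) (.of_forall fun y => mul_nonneg zero_le_two
      (mul_nonneg (eval_taylorTail_nonneg ..) (gaussWeight_pos y).le)),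
    integral_const_mul, ← gaussIntegral_apply]
  refine ENNReal.ofReal_le_ofReal ?_
  have hGI := gaussIntegral_taylorTail_le hp m hv
  have hSGI := mul_le_mul_of_nonneg_right hS (gaussIntegral_sq_nonneg p)
  linarith

lemma gaussMass_closedBall_le {p : MvPolynomial ι ℝ} {N : ℕ} (hp : p.totalDegree ≤ N) {m : ℕ}
    {ω : Set (EuclideanSpace ℝ ι)} (hω : MeasurableSet ω) {r ρ₀ θ S : ℝ} (hr : 0 < r)
    (hθ : 0 < θ)
    (hray : ∀ y : EuclideanSpace ℝ ι, ‖y‖ ≤ ρ₀ →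
      ENNReal.ofReal θ * volume (Metric.ball (0 : EuclideanSpace ℝ ι) (2 * r)) ≤
        rayMeasure volume r (raySet ω y))
    (hS : ∑ k ∈ Finset.Ico (m + 1) (N + 1), ((4 * r * √N) ^ k / k.factorial) ^ 2 ≤ S) :
    θ / 2 * Real.exp (-(8 / θ * m)) ^ 2 * gaussMass p (Metric.closedBall 0 ρ₀) ≤
      2 * Real.exp (4 * ρ₀ * r + 4 * r ^ 2) * gaussMass p ω + 4 * S * gaussIntegral (p ^ 2) := by
  set V := volume (Metric.ball (0 : EuclideanSpace ℝ ι) (2 * r))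
  have hV : V ≠ ∞ := measure_ball_lt_top.ne
  have hV0 : V ≠ 0 := (Metric.measure_ball_pos volume _ (by positivity)).ne'
  have hS0 : 0 ≤ S := le_trans (by positivity) hS
  have hω0 := gaussMass_nonneg p ω
  have hp0 := gaussIntegral_sq_nonneg p
  rw [← ENNReal.ofReal_le_ofReal_iff (by positivity), ENNReal.ofReal_mul (by positivity),
    ENNReal.ofReal_add (by positivity) (by positivity), ofReal_gaussMass,
    ← ENNReal.mul_le_mul_iff_left hV0 hV, add_mul,
    ← lintegral_lintegral_indicator_gaussDensity p hω r (by positivity),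
    ← lintegral_const_mul' _ _ ENNReal.ofReal_ne_top, ← lintegral_mul_const' _ _ hV]
  refine le_trans ?_ (add_le_add_right (lintegral_lintegral_taylorTail_le hp hS) _)
  rw [← lintegral_add_right _ (measurable_taylorTail_mul_gaussWeight p m N).lintegral_prod_right']
  refine (setLIntegral_mono' measurableSet_closedBall fun y hy => ?_).trans
    (setLIntegral_le_lintegral _ _)
  have hy' : ‖y‖ ≤ ρ₀ := mem_closedBall_zero_iff.1 hy
  exact ofReal_gaussDensity_mul_volume_le_lintegral hp m hω hθ hy' (hray y hy')

end RayEstimate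

/-! ### Concentration and absorption -/

section Absorption

open MvPolynomial

variable {ι : Type*} [Fintype ι]

lemma sum_gaussIntegral_sq_X_mul_le {p : MvPolynomial ι ℝ} {N : ℕ} (hp : p.totalDegree ≤ N) :
    ∑ i, gaussIntegral ((X i * p) ^ 2) ≤ Fintype.card ι * (2 * N + 1) * gaussIntegral (p ^ 2) := by
  classical
  have hX (i : ι) : gaussIntegral ((X i * p) ^ 2) ≤ (2 * N + 1) * gaussIntegral (p ^ 2) := by
    simpa [linForm, Pi.single_apply] using
      gaussIntegral_sq_linForm_mul_le (EuclideanSpace.single i (1 : ℝ)) hp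
  refine (Finset.sum_le_sum fun i _ => hX i).trans ?_
  simp [mul_assoc]

lemma gaussMass_compl_closedBall_le (p : MvPolynomial ι ℝ) {ρ₀ : ℝ} (hρ₀ : 0 ≤ ρ₀) :
    ρ₀ ^ 2 * gaussMass p (Metric.closedBall 0 ρ₀)ᶜ ≤ ∑ i, gaussIntegral ((X i * p) ^ 2) := by
  have heval (x : EuclideanSpace ℝ ι) :
      eval x.ofLp (∑ i, (X i * p) ^ 2) * gaussWeight x = ‖x‖ ^ 2 * gaussDensity p x := by
    simp [gaussDensity, EuclideanSpace.norm_sq_eq, mul_pow, Finset.sum_mul, mul_assoc]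
  have hint : Integrable fun x => ‖x‖ ^ 2 * gaussDensity p x :=
    (integrable_eval_mul_gaussWeight _).congr (.of_forall heval)
  calc ρ₀ ^ 2 * gaussMass p (Metric.closedBall 0 ρ₀)ᶜ
      = ∫ x in (Metric.closedBall 0 ρ₀)ᶜ, ρ₀ ^ 2 * gaussDensity p x :=
        (integral_const_mul _ _).symm
    _ ≤ ∫ x in (Metric.closedBall 0 ρ₀)ᶜ, ‖x‖ ^ 2 * gaussDensity p x := by
        refine setIntegral_mono_on ((integrable_gaussDensity p).const_mul _).integrableOn
          hint.integrableOn measurableSet_closedBall.compl fun x hx => ?_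
        have hx' : ρ₀ ≤ ‖x‖ := by simpa using (not_le.1 (mt mem_closedBall_zero_iff.2 hx)).le
        have := gaussDensity_nonneg p x
        gcongr
    _ ≤ ∫ x, ‖x‖ ^ 2 * gaussDensity p x :=
        setIntegral_le_integral hint
          (.of_forall fun x => mul_nonneg (sq_nonneg _) (gaussDensity_nonneg p x))
    _ = ∑ i, gaussIntegral ((X i * p) ^ 2) := by
        rw [← map_sum, gaussIntegral_apply]
        simp only [heval]

lemma gaussIntegral_sq_le_two_mul_gaussMass_closedBall {p : MvPolynomial ι ℝ} {N : ℕ}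
    (hp : p.totalDegree ≤ N) {ρ₀ : ℝ} (hρ₀ : 0 < ρ₀)
    (hN : 2 * (Fintype.card ι * (2 * N + 1)) ≤ ρ₀ ^ 2) :
    gaussIntegral (p ^ 2) ≤ 2 * gaussMass p (Metric.closedBall 0 ρ₀) := by
  have hsplit : gaussMass p (Metric.closedBall 0 ρ₀) + gaussMass p (Metric.closedBall 0 ρ₀)ᶜ =
      gaussIntegral (p ^ 2) := by
    rw [← gaussMass_univ, gaussMass, gaussMass, gaussMass, setIntegral_univ]
    exact integral_add_compl measurableSet_closedBall (integrable_gaussDensity p)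
  have htail : 2 * gaussMass p (Metric.closedBall 0 ρ₀)ᶜ ≤ gaussIntegral (p ^ 2) := by
    refine le_of_mul_le_mul_left ?_ (pow_pos hρ₀ 2)
    have h := (gaussMass_compl_closedBall_le p hρ₀.le).trans (sum_gaussIntegral_sq_X_mul_le hp)
    have := mul_le_mul_of_nonneg_right hN (gaussIntegral_sq_nonneg p)
    linarith
  linarith

lemma gaussIntegral_sq_le_mul_gaussMass {p : MvPolynomial ι ℝ} {N : ℕ} (hp : p.totalDegree ≤ N)
    {m : ℕ} {ω : Set (EuclideanSpace ℝ ι)} (hω : MeasurableSet ω) {r ρ₀ θ : ℝ} (hr : 0 < r)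
    (hρ₀ : 0 < ρ₀) (hθ : 0 < θ) (hN : 2 * (Fintype.card ι * (2 * N + 1)) ≤ ρ₀ ^ 2)
    (hray : ∀ y : EuclideanSpace ℝ ι, ‖y‖ ≤ ρ₀ →
      ENNReal.ofReal θ * volume (Metric.ball (0 : EuclideanSpace ℝ ι) (2 * r)) ≤
        rayMeasure volume r (raySet ω y))
    (hS : ∑ k ∈ Finset.Ico (m + 1) (N + 1), ((4 * r * √N) ^ k / k.factorial) ^ 2 ≤
      (θ / 8 * Real.exp (-(8 / θ * m))) ^ 2) (hθ1 : θ ≤ 1) :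
    gaussIntegral (p ^ 2) ≤
      16 / θ * Real.exp (16 / θ * m + 4 * ρ₀ * r + 4 * r ^ 2) * gaussMass p ω := by
  set η := Real.exp (-(8 / θ * m)) ^ 2 with hη
  set G := gaussIntegral (p ^ 2)
  set L := Real.exp (4 * ρ₀ * r + 4 * r ^ 2) with hL
  have hηpos : 0 < η := by positivity
  have hG : 0 ≤ G := gaussIntegral_sq_nonneg p
  have hmain := gaussMass_closedBall_le hp hω hr hθ hray hS
  rw [mul_pow, ← hη] at hmain
  have hconc := mul_le_mul_of_nonneg_left
    (gaussIntegral_sq_le_two_mul_gaussMass_closedBall hp hρ₀ hN)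
    (by positivity : 0 ≤ θ / 4 * η)
  have htail : 4 * ((θ / 8) ^ 2 * η) * G ≤ θ / 16 * η * G := by
    have : θ ^ 2 ≤ θ := by nlinarith
    have := mul_le_mul_of_nonneg_right this (by positivity : 0 ≤ η * G / 16)
    linarith
  have hle : θ / 8 * η * G ≤ 2 * L * gaussMass p ω := by
    have : 0 ≤ θ * η * G := by positivity
    linarith
  have hexp : Real.exp (16 / θ * m + 4 * ρ₀ * r + 4 * r ^ 2) = L / η := by
    rw [hL, hη, ← Real.exp_nat_mul, ← Real.exp_sub]
    congr 1
    push_cast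
    ring
  rw [hexp]
  calc G = 8 / (θ * η) * (θ / 8 * η * G) := by field_simp
    _ ≤ 8 / (θ * η) * (2 * L * gaussMass p ω) := by gcongr
    _ = _ := by ring

theorem exists_gaussIntegral_sq_le_gaussMass {θ : ℝ} (hθ : 0 < θ) (hθ1 : θ ≤ 1) :
    ∃ K A : ℝ, 0 < K ∧ 0 < A ∧ ∀ (p : MvPolynomial ι ℝ) (N : ℕ), p.totalDegree ≤ N →
      ∀ (ω : Set (EuclideanSpace ℝ ι)), MeasurableSet ω → ∀ r ρ₀ : ℝ, 0 < r → 0 < ρ₀ →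
        2 * (Fintype.card ι * (2 * N + 1)) ≤ ρ₀ ^ 2 →
        (∀ y : EuclideanSpace ℝ ι, ‖y‖ ≤ ρ₀ →
          ENNReal.ofReal θ * volume (Metric.ball (0 : EuclideanSpace ℝ ι) (2 * r)) ≤
            rayMeasure volume r (raySet ω y)) →
        gaussIntegral (p ^ 2) ≤ K * Real.exp (A * (r * √N + ρ₀ * r + r ^ 2)) * gaussMass p ω := by
  set B := Real.exp (1 + 8 / θ) / (θ / 8)
  refine ⟨16 / θ * Real.exp (32 / θ), 64 / θ * B + 4, by positivity, by positivity,
    fun p N hp ω hω r ρ₀ hr hρ₀ hN hray => ?_⟩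
  obtain ⟨m, hm, hS⟩ := exists_nat_sum_Ico_sq_pow_div_factorial_le (x := 4 * r * √N)
    (K := 8 / θ) (δ := θ / 8) (by positivity) (by positivity) (by positivity) (by linarith)
  refine (gaussIntegral_sq_le_mul_gaussMass hp hω hr hρ₀ hθ hN hray (hS N) hθ1).trans
    (mul_le_mul_of_nonneg_right ?_ (gaussMass_nonneg p ω))
  rw [mul_assoc (16 / θ), ← Real.exp_add]
  have hm' : 16 / θ * m ≤ 32 / θ + 64 / θ * B * (r * √N) := by
    calc 16 / θ * m ≤ 16 / θ * (B * (4 * r * √N) + 2) := by gcongr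
      _ = _ := by ring
  have : 0 ≤ 64 / θ * B * (ρ₀ * r + r ^ 2) + 4 * (r * √N) := by positivity
  refine mul_le_mul_of_nonneg_left (Real.exp_le_exp.2 ?_) (by positivity)
  linarith

end Absorption

/-! ### Hermite functions -/

/-- The polynomial `H` for which `hermite1 k x = H(x) exp (-x²/2)`, in terms of the probabilists'
Hermite polynomials of Mathlib. -/
def hermitePoly (k : ℕ) : Polynomial ℝ :=
  Polynomial.C ((2 ^ k * (k.factorial : ℝ) * √Real.pi) ^ (-(1 / 2 : ℝ)) * √2 ^ k) *
    ((Polynomial.hermite k).map (Int.castRingHom ℝ)).comp (Polynomial.C (√2) * Polynomial.X)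

lemma natDegree_hermitePoly_le (k : ℕ) : (hermitePoly k).natDegree ≤ k := by
  have hlin : (Polynomial.C (√2) * Polynomial.X).natDegree = 1 :=
    Polynomial.natDegree_C_mul_X _ (by positivity)
  refine (Polynomial.natDegree_C_mul_le _ _).trans ?_
  rw [Polynomial.natDegree_comp, hlin, mul_one]
  exact Polynomial.natDegree_map_le.trans Polynomial.natDegree_hermite.le

lemma iteratedDeriv_exp_neg_sq (k : ℕ) (x : ℝ) :
    iteratedDeriv k (fun y => Real.exp (-y ^ 2)) x =
      √2 ^ k * ((-1) ^ k * Polynomial.aeval (√2 * x) (Polynomial.hermite k) *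
        Real.exp (-x ^ 2)) := by
  have hsq (y : ℝ) : (√2 * y) ^ 2 / 2 = y ^ 2 := by
    rw [mul_pow, Real.sq_sqrt zero_le_two, mul_div_cancel_left₀ _ two_ne_zero]
  have h := congrFun (iteratedDeriv_comp_const_mul (n := k)
    (f := fun y => Real.exp (-(y ^ 2 / 2))) (by fun_prop) (√2)) x
  simpa only [hsq, iteratedDeriv_eq_iterate, Polynomial.deriv_gaussian_eq_hermite_mul_gaussian]
    using h

lemma hermite1_eq (k : ℕ) (x : ℝ) :
    hermite1 k x = (hermitePoly k).eval x * Real.exp (-(x ^ 2 / 2)) := by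
  have hexp : Real.exp (-(x ^ 2 / 2)) = Real.exp (x ^ 2 / 2) * Real.exp (-x ^ 2) := by
    rw [← Real.exp_add]; ring_nf
  have hsign : (-1 : ℝ) ^ k * (-1) ^ k = 1 := by rw [← mul_pow]; norm_num
  have heval : (hermitePoly k).eval x = (2 ^ k * (k.factorial : ℝ) * √Real.pi) ^ (-(1 / 2 : ℝ)) *
      √2 ^ k * Polynomial.aeval (√2 * x) (Polynomial.hermite k) := by
    simp [hermitePoly, Polynomial.aeval_def, Polynomial.eval_map]
  rw [hermite1, iteratedDeriv_exp_neg_sq, heval, hexp]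
  linear_combination (2 ^ k * (k.factorial : ℝ) * √Real.pi) ^ (-(1 / 2 : ℝ)) * √2 ^ k *
    Polynomial.aeval (√2 * x) (Polynomial.hermite k) * Real.exp (x ^ 2 / 2) *
      Real.exp (-x ^ 2) * hsign

lemma totalDegree_toMvPolynomial_le {σ R : Type*} [CommSemiring R] (q : Polynomial R) (i : σ) :
    (q.toMvPolynomial i).totalDegree ≤ q.natDegree := by
  rw [Polynomial.toMvPolynomial, Polynomial.aeval_eq_sum_range]
  refine MvPolynomial.totalDegree_finsetSum_le fun k hk => ?_
  refine (MvPolynomial.totalDegree_smul_le _ _).trans ?_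
  rw [MvPolynomial.X_pow_eq_monomial]
  refine (MvPolynomial.totalDegree_monomial_le _ _).trans ?_
  rw [Finsupp.sum_single_index rfl]
  exact Nat.lt_succ_iff.1 (Finset.mem_range.1 hk)

/-- The polynomial factor of the tensorized Hermite function `hermiteFun n α`. -/
def mvHermitePoly {n : ℕ} (α : Fin n → ℕ) : MvPolynomial (Fin n) ℝ :=
  ∏ j, (hermitePoly (α j)).toMvPolynomial j

lemma totalDegree_mvHermitePoly_le {n : ℕ} (α : Fin n → ℕ) :
    (mvHermitePoly α).totalDegree ≤ ∑ j, α j :=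
  (MvPolynomial.totalDegree_finsetProd _ _).trans <| Finset.sum_le_sum fun _ _ =>
    (totalDegree_toMvPolynomial_le _ _).trans (natDegree_hermitePoly_le _)

lemma hermiteFun_eq {n : ℕ} (α : Fin n → ℕ) (x : En n) :
    hermiteFun n α x =
      ((MvPolynomial.eval x.ofLp (mvHermitePoly α) * Real.exp (-(‖x‖ ^ 2 / 2)) : ℝ) : ℂ) := by
  rw [hermiteFun, ← Complex.ofReal_prod]
  simp only [hermite1_eq, Finset.prod_mul_distrib, ← Real.exp_sum, Finset.sum_neg_distrib,
    ← Finset.sum_div, mvHermitePoly, map_prod, MvPolynomial.eval_toMvPolynomial,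
    EuclideanSpace.norm_sq_eq, Real.norm_eq_abs, sq_abs]

lemma exists_eq_eval_mul_exp_of_mem_hermiteSpan {n N : ℕ} {f : En n → ℂ}
    (hf : f ∈ hermiteSpan n N) :
    ∃ p q : MvPolynomial (Fin n) ℝ, p.totalDegree ≤ N ∧ q.totalDegree ≤ N ∧
      ∀ x, f x = ((MvPolynomial.eval x.ofLp p : ℂ) + (MvPolynomial.eval x.ofLp q : ℂ) * Complex.I) *
        (Real.exp (-(‖x‖ ^ 2 / 2)) : ℂ) := by
  induction hf using Submodule.span_induction with
  | mem g hg =>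
    obtain ⟨α, hα, rfl⟩ := hg
    exact ⟨mvHermitePoly α, 0, (totalDegree_mvHermitePoly_le α).trans hα, by simp,
      fun x => by simp [hermiteFun_eq]⟩
  | zero => exact ⟨0, 0, by simp, by simp, fun x => by simp⟩
  | add f g _ _ hf hg =>
    obtain ⟨p, q, hp, hq, hf⟩ := hf
    obtain ⟨p', q', hp', hq', hg⟩ := hg
    refine ⟨p + p', q + q', (MvPolynomial.totalDegree_add _ _).trans (max_le hp hp'),
      (MvPolynomial.totalDegree_add _ _).trans (max_le hq hq'), fun x => ?_⟩
    rw [Pi.add_apply, hf, hg]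
    push_cast [map_add]
    ring
  | smul c f _ hf =>
    obtain ⟨p, q, hp, hq, hf⟩ := hf
    refine ⟨c.re • p - c.im • q, c.re • q + c.im • p,
      (MvPolynomial.totalDegree_sub _ _).trans (max_le
        ((MvPolynomial.totalDegree_smul_le _ _).trans hp)
        ((MvPolynomial.totalDegree_smul_le _ _).trans hq)),
      (MvPolynomial.totalDegree_add _ _).trans (max_le
        ((MvPolynomial.totalDegree_smul_le _ _).trans hq)
        ((MvPolynomial.totalDegree_smul_le _ _).trans hp)), fun x => ?_⟩
    rw [Pi.smul_apply, hf, smul_eq_mul]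
    conv_lhs => rw [← Complex.re_add_im c]
    simp only [map_sub, map_add, MvPolynomial.smul_eval, Complex.ofReal_sub,
      Complex.ofReal_add, Complex.ofReal_mul]
    linear_combination (MvPolynomial.eval x.ofLp q * (Real.exp (-(‖x‖ ^ 2 / 2)) : ℂ) * c.im) *
      Complex.I_sq

lemma exists_norm_sq_eq_of_mem_hermiteSpan {n N : ℕ} {f : En n → ℂ} (hf : f ∈ hermiteSpan n N) :
    ∃ p q : MvPolynomial (Fin n) ℝ, p.totalDegree ≤ N ∧ q.totalDegree ≤ N ∧
      ∀ x, ‖f x‖ ^ 2 = gaussDensity p x + gaussDensity q x := by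
  obtain ⟨p, q, hp, hq, hf⟩ := exists_eq_eval_mul_exp_of_mem_hermiteSpan hf
  refine ⟨p, q, hp, hq, fun x => ?_⟩
  have hexp : Real.exp (-(‖x‖ ^ 2 / 2)) ^ 2 = gaussWeight x := by
    rw [gaussWeight, ← Real.exp_nat_mul]
    congr 1
    push_cast
    ring
  rw [hf, norm_mul, mul_pow, Complex.sq_norm, Complex.normSq_add_mul_I, Complex.norm_real,
    Real.norm_eq_abs, sq_abs, hexp, add_mul, gaussDensity, gaussDensity]

lemma setIntegral_norm_sq_eq {n : ℕ} {f : En n → ℂ} {p q : MvPolynomial (Fin n) ℝ}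
    (hf : ∀ x, ‖f x‖ ^ 2 = gaussDensity p x + gaussDensity q x) (s : Set (En n)) :
    ∫ x in s, ‖f x‖ ^ 2 = gaussMass p s + gaussMass q s := by
  simp only [hf]
  exact integral_add (integrable_gaussDensity p).integrableOn
    (integrable_gaussDensity q).integrableOn

/-! ### Thickness at the scale of the degree -/

lemma jap_le_one_add_norm {n : ℕ} (x : En n) : jap n x ≤ 1 + ‖x‖ := by
  rw [jap, Real.sqrt_le_left (by positivity)]
  nlinarith [norm_nonneg x]

lemma jap_rpow_le {n : ℕ} {C N ε : ℝ} (hC : 0 ≤ C) (hN : 1 ≤ N) (hε : 0 ≤ ε) (hε1 : ε ≤ 1)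
    {x : En n} (hx : ‖x‖ ≤ (C + 1) * √N) :
    jap n x ^ (1 - ε) ≤ (C + 2) * N ^ ((1 - ε) / 2) := by
  have hN1 : 1 ≤ √N := Real.one_le_sqrt.2 hN
  calc jap n x ^ (1 - ε) ≤ ((C + 2) * √N) ^ (1 - ε) := by
        refine Real.rpow_le_rpow (Real.sqrt_nonneg _) ?_ (by linarith)
        linarith [jap_le_one_add_norm x]
    _ = (C + 2) ^ (1 - ε) * N ^ ((1 - ε) / 2) := by
        rw [Real.mul_rpow (by positivity) (by positivity), Real.sqrt_eq_rpow,
          ← Real.rpow_mul (by positivity)]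
        ring_nf
    _ ≤ (C + 2) * N ^ ((1 - ε) / 2) := by
        gcongr
        exact Real.rpow_le_self_of_one_le (by linarith) (by linarith)

lemma rpow_le_sqrt {N ε : ℝ} (hN : 1 ≤ N) (hε : 0 ≤ ε) : N ^ ((1 - ε) / 2) ≤ √N := by
  rw [Real.sqrt_eq_rpow]
  exact Real.rpow_le_rpow_of_exponent_le hN (by linarith)

lemma rpow_mul_sqrt {N : ℝ} (hN : 0 < N) (ε : ℝ) :
    N ^ ((1 - ε) / 2) * √N = N ^ (1 - ε / 2) := by
  rw [Real.sqrt_eq_rpow, ← Real.rpow_add hN]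
  ring_nf

lemma ofReal_mul_volume_ball_le_of_thickWith {n : ℕ} {γ : ℝ} {ρ : En n → ℝ} {ω : Set (En n)}
    (hω : MeasurableSet ω) (hρ : ∀ x, 0 < ρ x) (hth : ThickWith n γ ρ ω) {y : En n} {s D : ℝ}
    (hD : 0 < D) (hM : ∀ x ∈ Metric.ball y s, ρ x ≤ (D - 1) * s) :
    ENNReal.ofReal (γ / (10 * D) ^ n) * volume (Metric.ball (0 : En n) (2 * (D * s))) ≤
      volume (ω ∩ Metric.ball y (D * s)) := by
  have hcover := measure_ball_le_of_thick volume hω hρ hth hM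
  rw [finrank_euclideanSpace, Fintype.card_fin] at hcover
  have hball : volume (Metric.ball (0 : En n) (2 * (D * s))) =
      ENNReal.ofReal ((2 * D) ^ n) * volume (Metric.ball y s) := by
    rw [← mul_assoc, Measure.addHaar_ball_mul_of_pos _ _ (by positivity),
      Measure.addHaar_ball_center, Measure.addHaar_ball_center volume y, finrank_euclideanSpace,
      Fintype.card_fin]
  have hconst : γ / (10 * D) ^ n * (2 * D) ^ n = (5 ^ n)⁻¹ * γ := by
    rw [show 10 * D = 5 * (2 * D) by ring, mul_pow 5]
    field_simp
  calc ENNReal.ofReal (γ / (10 * D) ^ n) * volume (Metric.ball (0 : En n) (2 * (D * s)))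
      = (5 ^ n)⁻¹ * (ENNReal.ofReal γ * volume (Metric.ball y s)) := by
        rw [hball, ← mul_assoc, ← mul_assoc, ← ENNReal.ofReal_mul' (by positivity), hconst,
          ENNReal.ofReal_mul (by positivity), ENNReal.ofReal_inv_of_pos (by positivity),
          ENNReal.ofReal_pow (by positivity), ENNReal.ofReal_ofNat]
    _ ≤ (5 ^ n)⁻¹ * (5 ^ n * volume (ω ∩ Metric.ball y (s + (D - 1) * s))) :=
        mul_le_mul_right hcover _
    _ = volume (ω ∩ Metric.ball y (D * s)) := by
        rw [← mul_assoc, ENNReal.inv_mul_cancel (by positivity) (by finiteness), one_mul]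
        ring_nf

lemma ofReal_mul_volume_ball_le_rayMeasure {n : ℕ} {ε R γ C : ℝ} (hε : 0 ≤ ε) (hε1 : ε ≤ 1)
    (hR : 0 ≤ R) (hC : 0 ≤ C) {ρ : En n → ℝ} (hρ : ∀ x, 0 < ρ x)
    (hρR : ∀ x, ρ x ≤ R * jap n x ^ (1 - ε)) {ω : Set (En n)} (hω : MeasurableSet ω)
    (hth : ThickWith n γ ρ ω) {N D : ℝ} (hN : 1 ≤ N) (hD : R * (C + 2) ≤ D - 1) {y : En n}
    (hy : ‖y‖ ≤ C * √N) :
    ENNReal.ofReal (γ / (10 * D) ^ n / 2) *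
        volume (Metric.ball (0 : En n) (2 * (D * N ^ ((1 - ε) / 2)))) ≤
      rayMeasure volume (D * N ^ ((1 - ε) / 2)) (raySet ω y) := by
  have hM : ∀ x ∈ Metric.ball y (N ^ ((1 - ε) / 2)), ρ x ≤ (D - 1) * N ^ ((1 - ε) / 2) := by
    intro x hx
    have hxy : ‖x - y‖ < N ^ ((1 - ε) / 2) := mem_ball_iff_norm.1 hx
    have hxC : ‖x‖ ≤ (C + 1) * √N := by
      linarith [norm_le_norm_add_norm_sub' x y, rpow_le_sqrt hN hε]
    calc ρ x ≤ R * jap n x ^ (1 - ε) := hρR x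
      _ ≤ R * ((C + 2) * N ^ ((1 - ε) / 2)) := by gcongr; exact jap_rpow_le hC hN hε hε1 hxC
      _ = R * (C + 2) * N ^ ((1 - ε) / 2) := by ring
      _ ≤ (D - 1) * N ^ ((1 - ε) / 2) := by gcongr
  have hD0 : 0 < D := by linarith [mul_nonneg hR (by linarith : 0 ≤ C + 2)]
  have hthick := ofReal_mul_volume_ball_le_of_thickWith hω hρ hth hD0 hM
  refine le_trans ?_ (measure_inter_ball_le_rayMeasure volume hω y _)
  rw [div_eq_inv_mul _ (2 : ℝ), ENNReal.ofReal_mul (by positivity),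
    ENNReal.ofReal_inv_of_pos two_pos, ENNReal.ofReal_ofNat, mul_assoc]
  gcongr

theorem exists_gaussIntegral_sq_le_of_thickWith (n : ℕ) {ε R γ : ℝ} (hε : 0 ≤ ε) (hε1 : ε ≤ 1)
    (hR : 0 ≤ R) (hγ : 0 < γ) (hγ1 : γ ≤ 1) :
    ∃ K A : ℝ, 0 < K ∧ 0 < A ∧ ∀ ρ : En n → ℝ, (∀ x, 0 < ρ x) →
      (∀ x, ρ x ≤ R * jap n x ^ (1 - ε)) → ∀ ω : Set (En n), MeasurableSet ω →
        ThickWith n γ ρ ω → ∀ N : ℕ, 1 ≤ N → ∀ p : MvPolynomial (Fin n) ℝ, p.totalDegree ≤ N →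
          gaussIntegral (p ^ 2) ≤ K * Real.exp (A * (N : ℝ) ^ (1 - ε / 2)) * gaussMass p ω := by
  set C : ℝ := 6 * (n + 1) with hC
  set D : ℝ := 1 + R * (C + 2) with hD
  have hD0 : 0 < D := by positivity
  have hD1 : 1 ≤ (10 * D) ^ n := one_le_pow₀ (by linarith [show 0 ≤ R * (C + 2) by positivity])
  have hθ1 : γ / (10 * D) ^ n / 2 ≤ 1 := by
    linarith [div_le_one_of_le₀ (hγ1.trans hD1) (by positivity)]
  obtain ⟨K, A, hK, hA, habsorb⟩ := exists_gaussIntegral_sq_le_gaussMass (ι := Fin n)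
    (by positivity : 0 < γ / (10 * D) ^ n / 2) hθ1
  refine ⟨K, A * (D + C * D + D ^ 2), hK, by positivity, fun ρ hρ hρR ω hω hth N hN p hp => ?_⟩
  have hN1 : (1 : ℝ) ≤ N := mod_cast hN
  set s := (N : ℝ) ^ ((1 - ε) / 2)
  have hsN : s * √N = (N : ℝ) ^ (1 - ε / 2) := rpow_mul_sqrt (by positivity) ε
  have hradius : 2 * (Fintype.card (Fin n) * (2 * N + 1)) ≤ (C * √N) ^ 2 := by
    have : (n : ℝ) ≤ (n + 1) ^ 2 := by nlinarith
    rw [mul_pow, Real.sq_sqrt (by positivity), Fintype.card_fin, hC]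
    calc (2 * (n * (2 * N + 1)) : ℝ) ≤ 2 * ((n + 1) ^ 2 * (2 * N + N)) := by gcongr
      _ ≤ (6 * (n + 1)) ^ 2 * N := by nlinarith [sq_nonneg ((n : ℝ) + 1)]
  refine (habsorb p N hp ω hω (D * s) (C * √N) (by positivity) (by positivity) hradius fun y hy =>
    ofReal_mul_volume_ball_le_rayMeasure hε hε1 hR (by positivity) hρ hρR hω hth hN1
      (by rw [hD, add_sub_cancel_left]) hy).trans ?_
  have hss : s ^ 2 ≤ s * √N := by
    rw [sq]; gcongr; exact rpow_le_sqrt hN1 hε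
  have := gaussMass_nonneg p ω
  gcongr ?_ * Real.exp ?_ * _
  rw [← hsN, mul_assoc A]
  refine mul_le_mul_of_nonneg_left ?_ hA.le
  linarith [mul_le_mul_of_nonneg_left hss (sq_nonneg D)]

/-! ### The spectral inequality -/

lemma L2norm_le_of_gaussIntegral_sq_le {n N : ℕ} {ω : Set (En n)} {K : ℝ} (hK : 0 ≤ K)
    (h : ∀ p : MvPolynomial (Fin n) ℝ, p.totalDegree ≤ N →
      gaussIntegral (p ^ 2) ≤ K * gaussMass p ω) {f : En n → ℂ} (hf : f ∈ hermiteSpan n N) :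
    L2norm n f ≤ √K * L2normOn n ω f := by
  obtain ⟨p, q, hp, hq, hfpq⟩ := exists_norm_sq_eq_of_mem_hermiteSpan hf
  rw [L2norm, L2normOn, ← Real.sqrt_mul hK, ← setIntegral_univ, setIntegral_norm_sq_eq hfpq,
    setIntegral_norm_sq_eq hfpq, gaussMass_univ, gaussMass_univ, mul_add]
  exact Real.sqrt_le_sqrt (add_le_add (h p hp) (h q hq))

lemma sqrt_exp_le_rpow {κ γ A T : ℝ} (hκ : 1 < κ) (hγ : 0 < γ) (hγ1 : γ ≤ 1) (hA : 0 ≤ A)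
    (hT : 0 ≤ T) :
    √(Real.exp (A * T)) ≤ (κ / γ) ^ (A / (2 * Real.log κ) * T) := by
  have hlog : 0 < Real.log κ := Real.log_pos hκ
  calc √(Real.exp (A * T)) = κ ^ (A / (2 * Real.log κ) * T) := by
        rw [← Real.exp_half, Real.rpow_def_of_pos (by positivity)]
        congr 1
        field_simp
    _ ≤ (κ / γ) ^ (A / (2 * Real.log κ) * T) := by
        refine Real.rpow_le_rpow (by positivity) ?_ (by positivity)
        exact le_div_self (by positivity) hγ hγ1

theorem spectral_inequality_hermite_continuous_density_general (n : ℕ) {κt : ℝ} (hκt : 1 < κt)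
    {ε Rε γ : ℝ} (hε : 0 ≤ ε) (hε1 : ε ≤ 1) (hR : 0 ≤ Rε) (hγ : 0 < γ) (hγ1 : γ ≤ 1) :
    ∃ κ Ct : ℝ, 0 < κ ∧ 0 < Ct ∧
      ∀ ρ : En n → ℝ, (∀ x, 0 < ρ x) → (∀ x, ρ x ≤ Rε * jap n x ^ (1 - ε)) →
        ∀ ω : Set (En n), MeasurableSet ω → ThickWith n γ ρ ω →
          ∀ N : ℕ, 1 ≤ N → ∀ f ∈ hermiteSpan n N,
            L2norm n f ≤ κ * (κt / γ) ^ (Ct * (N : ℝ) ^ (1 - ε / 2)) * L2normOn n ω f := by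
  obtain ⟨K, A, hK, hA, h⟩ := exists_gaussIntegral_sq_le_of_thickWith n hε hε1 hR hγ hγ1
  have hlog : 0 < Real.log κt := Real.log_pos hκt
  refine ⟨√K, A / (2 * Real.log κt), by positivity, by positivity,
    fun ρ hρ hρR ω hω hth N hN f hf => ?_⟩
  refine (L2norm_le_of_gaussIntegral_sq_le (by positivity) (h ρ hρ hρR ω hω hth N hN) hf).trans ?_
  rw [Real.sqrt_mul hK.le]
  gcongr
  · exact Real.sqrt_nonneg _
  · exact sqrt_exp_le_rpow hκt hγ hγ1 hA.le (by positivity)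

/-- **Corollary "Spectral2"**: spectral inequality for continuous densities
ρ ≤ R_ε⟨x⟩^{1-ε} (with R_ε ≤ 1/(2(1-ε)) when ε < 1) and thickness parameter
1 - 6^{-n} < γ ≤ 1. -/
theorem spectral_inequality_hermite_continuous_density (n : ℕ) :
    ∃ κt : ℝ, 1 < κt ∧
      ∀ ε Rε γ : ℝ, 0 < ε → ε ≤ 1 → 0 < Rε → (ε < 1 → Rε ≤ 1 / (2 * (1 - ε))) →
        1 - 1 / 6 ^ n < γ → γ ≤ 1 →
        ∃ κ Ct : ℝ, 0 < κ ∧ 0 < Ct ∧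
          ∀ ρ : En n → ℝ, Continuous ρ → (∀ x, 0 < ρ x) →
            (∀ x, ρ x ≤ Rε * jap n x ^ (1 - ε)) →
            ∀ ω : Set (En n), MeasurableSet ω → ThickWith n γ ρ ω →
              ∀ N : ℕ, 1 ≤ N → ∀ f ∈ hermiteSpan n N,
                L2norm n f ≤ κ * (κt / γ) ^ (Ct * (N : ℝ) ^ (1 - ε / 2)) *
                  L2normOn n ω f := by
  refine ⟨2, one_lt_two, fun ε Rε γ hε hε1 hR _ hγ hγ1 => ?_⟩
  have hγ0 : 0 < γ :=
    (sub_nonneg.2 (div_le_one_of_le₀ (one_le_pow₀ (by norm_num)) (by positivity))).trans_lt hγ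
  obtain ⟨κ, Ct, hκ, hCt, h⟩ := spectral_inequality_hermite_continuous_density_general n
    one_lt_two hε.le hε1 hR.le hγ0 hγ1
  exact ⟨κ, Ct, hκ, hCt, fun ρ _ => h ρ⟩

end
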